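/- arXiv:1902.07201 — 4 statements merged into one kernel-verified Lean document; each statement's English description precedes it below -/
import Mathlib

section
/- Let m ≥ 2 and let S_1, …, S_m be pairwise disjoint, non-empty, finite subsets of the affine space ℂ^n. If the affine span of the union S_1 ∪ … ∪ S_m has dimension at least 5, then there exists an (affine) line ℓ in ℂ^n such that ℓ intersects exactly two of the sets S_1, …, S_m (i.e., the set of indices i with ℓ ∩ S_i ≠ ∅ has exactly two elements). -/
lemma ek_exists_min {ι T : Type*} [Fintype ι] [DecidableEq ι] [Fintype T]
    (s : T → Finset ι) (w : T → ℝ) (hw : ∀ t, 0 < w t) (α : T → ι → ℝ)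
    (hα : ∀ t, ∀ i ∈ s t, 0 < α t i) (hcard : ∀ t, (s t).card = 3)
    (hcov : ∀ i j, i ≠ j → ∃ t, i ∈ s t ∧ j ∈ s t) :
    ∃ x : ι → ℝ, ∀ i, ∑ t, w t * ((if i ∈ s t then α t i * Real.exp (x i) else 0) /
        (∑ l ∈ s t, α t l * Real.exp (x l))) = ∑ t, w t * (if i ∈ s t then 1 / 3 else 0) := by
  classical
  rcases isEmpty_or_nonempty ι with hι | ⟨⟨i0⟩⟩
  · exact ⟨fun _ => 0, fun i => (hι.false i).elim⟩
  set R : T → (ι → ℝ) → ℝ := fun t x => ∑ l ∈ s t, α t l * Real.exp (x l) with hR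
  have hRpos : ∀ t x, 0 < R t x := fun t x => by
    apply Finset.sum_pos
    · intro l hl
      exact mul_pos (hα t l hl) (Real.exp_pos _)
    · rw [← Finset.card_pos, hcard]; norm_num
  set H : T → (ι → ℝ) → ℝ := fun t x => Real.log (R t x) - (1 / 3) * ∑ l ∈ s t, x l with hH
  set G : (ι → ℝ) → ℝ := fun x => ∑ t, w t * H t x with hG
  have hGcont : Continuous G := by
    refine continuous_finsetSum _ fun t _ => continuous_const.mul (Continuous.sub ?_ ?_)
    · exact Continuous.log (by fun_prop) fun x => (hRpos t x).ne'
    · fun_prop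
  obtain ⟨m, hm⟩ : ∃ m : ℝ, ∀ t, ∀ l ∈ s t, m ≤ Real.log (α t l) := by
    obtain ⟨m, hm⟩ := (Set.finite_range (fun p : T × ι => Real.log (α p.1 p.2))).bddBelow
    exact ⟨m, fun t l _ => hm ⟨(t, l), rfl⟩⟩
  obtain ⟨w0, hw0, hw0'⟩ : ∃ w0 : ℝ, 0 < w0 ∧ ∀ t, w0 ≤ w t := by
    rcases isEmpty_or_nonempty T with hT | hT
    · exact ⟨1, one_pos, fun t => (hT.false t).elim⟩
    · obtain ⟨t, ht⟩ := Finite.exists_min w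
      exact ⟨w t, hw t, ht⟩
  have hlog : ∀ t x, ∀ l ∈ s t, m + x l ≤ Real.log (R t x) := by
    intro t x l hl
    have h1 : α t l * Real.exp (x l) ≤ R t x :=
      Finset.single_le_sum (f := fun l => α t l * Real.exp (x l))
        (fun k hk => (mul_pos (hα t k hk) (Real.exp_pos _)).le) hl
    have h2 := Real.log_le_log (mul_pos (hα t l hl) (Real.exp_pos _)) h1
    rw [Real.log_mul (hα t l hl).ne' (Real.exp_pos _).ne', Real.log_exp] at h2
    linarith [hm t l hl]
  have hHlow : ∀ t x, ∀ i ∈ s t, ∀ j ∈ s t, m + (x j - x i) / 3 ≤ H t x := by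
    intro t x i hi j hj
    have h1 : Real.log (R t x) - m - x i ≤ ∑ l ∈ s t, (Real.log (R t x) - m - x l) :=
      Finset.single_le_sum (f := fun l => Real.log (R t x) - m - x l)
        (fun k hk => by linarith [hlog t x k hk]) hi
    rw [Finset.sum_sub_distrib, Finset.sum_const, hcard] at h1
    have h2 := hlog t x j hj
    simp only [hH]
    simp only [nsmul_eq_mul] at h1
    push_cast at h1
    linarith
  have hHm : ∀ t x, m ≤ H t x := by
    intro t x
    obtain ⟨i, hi⟩ : (s t).Nonempty := by rw [← Finset.card_pos, hcard]; norm_num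
    have := hHlow t x i hi i hi
    simpa using this
  have hGlow : ∀ x t, ∀ i ∈ s t, ∀ j ∈ s t, (∑ t, w t * m) + w t * ((x j - x i) / 3) ≤ G x := by
    intro x t i hi j hj
    have h1 : w t * (H t x - m) ≤ ∑ t, w t * (H t x - m) :=
      Finset.single_le_sum (f := fun t => w t * (H t x - m))
        (fun k _ => mul_nonneg (hw k).le (by linarith [hHm k x])) (Finset.mem_univ t)
    have h2 : ∑ t, w t * (H t x - m) = G x - ∑ t, w t * m := by
      simp only [hG, mul_sub, Finset.sum_sub_distrib]
    have h3 : w t * ((x j - x i) / 3) ≤ w t * (H t x - m) :=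
      mul_le_mul_of_nonneg_left (by linarith [hHlow t x i hi j hj]) (hw t).le
    linarith
  have hG0 : (∑ t, w t * m) ≤ G 0 := Finset.sum_le_sum fun t _ =>
    mul_le_mul_of_nonneg_left (hHm t 0) (hw t).le
  set K : ℝ := 3 * (G 0 - ∑ t, w t * m) / w0 with hK
  have hK0 : 0 ≤ K := div_nonneg (by linarith) hw0.le
  have hbd : ∀ x, G x ≤ G 0 → ∀ i j, x j - x i ≤ K := by
    intro x hx i j
    by_cases hij : i = j
    · subst hij; simpa using hK0
    obtain ⟨t, hi, hj⟩ := hcov i j hij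
    by_cases hneg : x j - x i ≤ 0
    · linarith
    have h1 := hGlow x t i hi j hj
    have h2 : w0 * (x j - x i) ≤ w t * (x j - x i) :=
      mul_le_mul_of_nonneg_right (hw0' t) (by linarith)
    rw [hK, le_div_iff₀ hw0]
    linarith
  have hshift : ∀ x : ι → ℝ, ∀ a : ℝ, G (fun i => x i - a) = G x := by
    intro x a
    refine Finset.sum_congr rfl fun t _ => ?_
    congr 1
    have h1 : R t (fun i => x i - a) = R t x * Real.exp (-a) := by
      simp only [hR, Finset.sum_mul]
      refine Finset.sum_congr rfl fun l _ => ?_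
      rw [sub_eq_add_neg, Real.exp_add]; ring
    simp only [hH]
    rw [h1, Real.log_mul (hRpos t x).ne' (Real.exp_pos _).ne', Real.log_exp,
      Finset.sum_sub_distrib, Finset.sum_const, hcard]
    simp only [nsmul_eq_mul]; push_cast; ring
  obtain ⟨x, hxmem, hxmin⟩ := (isCompact_Icc (a := fun _ : ι => -K) (b := fun _ => K)).exists_isMinOn
    ⟨0, fun _ => by simpa using hK0, fun _ => by simpa using hK0⟩ hGcont.continuousOn
  have hmin : ∀ y, G x ≤ G y := by
    intro y
    by_cases hy : G y ≤ G 0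
    · rw [← hshift y (y i0)]
      apply hxmin
      refine ⟨fun j => ?_, fun j => hbd y hy i0 j⟩
      have := hbd y hy j i0
      simp only; linarith
    · have : G x ≤ G 0 := hxmin ⟨fun _ => by simpa using hK0, fun _ => by simpa using hK0⟩
      linarith
  refine ⟨x, fun i => ?_⟩
  have hder : HasDerivAt (fun u : ℝ => G (fun l => x l + if l = i then u else 0))
      (∑ t, w t * ((if i ∈ s t then α t i * Real.exp (x i) else 0) / R t x
        - (1 / 3) * (if i ∈ s t then 1 else 0))) 0 := by
    refine HasDerivAt.fun_sum fun t _ => HasDerivAt.const_mul _ (HasDerivAt.sub ?_ ?_)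
    · have hx0 : (fun l => x l + if l = i then (0:ℝ) else 0) = x := by ext l; simp
      have hRd : HasDerivAt (fun u : ℝ => R t (fun l => x l + if l = i then u else 0))
          (if i ∈ s t then α t i * Real.exp (x i) else 0) 0 := by
        have : (if i ∈ s t then α t i * Real.exp (x i) else 0) =
            ∑ l ∈ s t, α t l * (Real.exp (x l + if l = i then 0 else 0) * if l = i then 1 else 0) := by
          simp
        rw [this]
        refine HasDerivAt.fun_sum fun l _ => HasDerivAt.const_mul _ (HasDerivAt.exp ?_)
        refine HasDerivAt.const_add _ ?_
        split_ifs
        · exact hasDerivAt_id _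
        · exact hasDerivAt_const _ _
      have := hRd.log (by rw [hx0]; exact (hRpos t x).ne')
      rwa [hx0] at this
    · refine HasDerivAt.const_mul _ ?_
      have : (if i ∈ s t then (1:ℝ) else 0) = ∑ l ∈ s t, if l = i then 1 else 0 := by simp
      rw [this]
      refine HasDerivAt.fun_sum fun l _ => HasDerivAt.const_add _ ?_
      split_ifs
      · exact hasDerivAt_id _
      · exact hasDerivAt_const _ _
  have hloc : IsLocalMin (fun u : ℝ => G (fun l => x l + if l = i then u else 0)) 0 := by
    refine Filter.Eventually.of_forall fun u => ?_
    have hx0 : (fun l => x l + if l = i then (0:ℝ) else 0) = x := by ext l; simp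
    simp only [hx0]
    exact hmin _
  have := hloc.hasDerivAt_eq_zero hder
  simp only [mul_sub, Finset.sum_sub_distrib] at this
  rw [sub_eq_zero] at this
  rw [this]
  refine Finset.sum_congr rfl fun t _ => ?_
  split_ifs <;> simp

open Matrix in
lemma ek_trace_sq_le {ι : Type*} [Fintype ι] [DecidableEq ι] (M : Matrix ι ι ℂ)
    (hM : M.IsHermitian) :
    (∑ i, (M i i).re) ^ 2 ≤ M.rank * ∑ i, ∑ j, ‖M i j‖ ^ 2 := by
  have h1 : ∑ i, (M i i).re = ∑ i, hM.eigenvalues i := by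
    have := hM.trace_eq_sum_eigenvalues
    have h := congrArg Complex.re this
    simpa [Matrix.trace] using h
  have h2 : ∑ i, ∑ j, ‖M i j‖ ^ 2 = ∑ i, hM.eigenvalues i ^ 2 := by
    have h : (M * M).trace = ∑ i, ((hM.eigenvalues i : ℂ)) ^ 2 := by
      conv_lhs => rw [hM.spectral_theorem]
      rw [← map_mul, Matrix.diagonal_mul_diagonal]
      rw [Unitary.conjStarAlgAut_apply, Matrix.trace_mul_cycle]
      simp [Matrix.trace, sq]
    have h' := congrArg Complex.re h
    have h3 : (M * M).trace = ∑ i, ∑ j, ((‖M i j‖ ^ 2 : ℝ) : ℂ) := by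
      simp only [Matrix.trace, Matrix.diag, Matrix.mul_apply]
      refine Finset.sum_congr rfl fun i _ => Finset.sum_congr rfl fun j _ => ?_
      rw [← hM.apply j i]
      simp [← Complex.mul_conj']
    rw [h3] at h
    exact_mod_cast h
  rw [h1, h2, hM.rank_eq_card_non_zero_eigs, Fintype.card_subtype]
  have h4 : ∑ i, hM.eigenvalues i =
      ∑ i with hM.eigenvalues i ≠ 0, hM.eigenvalues i := by
    rw [Finset.sum_filter_ne_zero]
  rw [h4]
  refine sq_sum_le_card_mul_sum_sq.trans ?_
  refine mul_le_mul_of_nonneg_left ?_ (by positivity)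
  exact Finset.sum_le_sum_of_subset_of_nonneg (Finset.filter_subset _ _) fun i _ _ => sq_nonneg _

open Matrix in
lemma ek_design {ι T : Type*} [Fintype ι] [DecidableEq ι] [Fintype T]
    (A : Matrix T ι ℂ) (s : T → Finset ι) (hs : ∀ t i, A t i ≠ 0 ↔ i ∈ s t)
    (hcard : ∀ t, (s t).card = 3) (w : T → ℝ) (hw : ∀ t, 0 < w t)
    (hpair : ∀ i j, i ≠ j → ∑ t, w t * (if i ∈ s t ∧ j ∈ s t then 1 else 0) = 1) :
    Fintype.card ι ≤ A.rank + 3 := by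
  classical
  by_contra hcon
  push Not at hcon
  set n : ℝ := (Fintype.card ι : ℝ) with hn
  have hn4 : (A.rank : ℝ) + 4 ≤ n := by rw [hn]; exact_mod_cast hcon
  have hcov : ∀ i j, i ≠ j → ∃ t, i ∈ s t ∧ j ∈ s t := by
    intro i j hij
    by_contra hc
    push Not at hc
    have h := hpair i j hij
    rw [Finset.sum_eq_zero] at h
    · norm_num at h
    · intro t _
      rw [if_neg (fun h => hc t h.1 h.2), mul_zero]
  have hdeg : ∀ i, ∑ t, w t * (if i ∈ s t then 1 / 3 else 0) = (n - 1) / 6 := by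
    intro i
    have h1 : ∑ j ∈ Finset.univ.erase i, ∑ t, w t * (if i ∈ s t ∧ j ∈ s t then (1:ℝ) else 0)
        = n - 1 := by
      rw [Finset.sum_congr rfl (fun j hj => hpair i j (Finset.ne_of_mem_erase hj).symm)]
      rw [Finset.sum_const, Finset.card_erase_of_mem (Finset.mem_univ i), Finset.card_univ,
        nsmul_eq_mul, mul_one, Nat.cast_sub (Fintype.card_pos_iff.mpr ⟨i⟩)]
      simp [hn]
    rw [Finset.sum_comm] at h1
    have h2 : ∀ t, ∑ j ∈ Finset.univ.erase i, w t * (if i ∈ s t ∧ j ∈ s t then (1:ℝ) else 0)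
        = 6 * (w t * (if i ∈ s t then 1 / 3 else 0)) := by
      intro t
      by_cases hi : i ∈ s t
      · simp only [hi, true_and, if_true]
        rw [← Finset.mul_sum, Finset.sum_ite_mem]
        have : (Finset.univ.erase i) ∩ s t = (s t).erase i := by ext; simp
        rw [this, Finset.sum_const, Finset.card_erase_of_mem hi, hcard]
        simp; ring
      · simp [hi]
    rw [Finset.sum_congr rfl (fun t _ => h2 t), ← Finset.mul_sum] at h1
    linarith
  obtain ⟨x, hx⟩ := ek_exists_min s w hw (fun t i => ‖A t i‖ ^ 2)
    (fun t i hi => by have := norm_pos_iff.mpr ((hs t i).mpr hi); positivity) hcard hcov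
  set R : T → ℝ := fun t => ∑ l ∈ s t, ‖A t l‖ ^ 2 * Real.exp (x l) with hR
  have hRpos : ∀ t, 0 < R t := fun t => by
    apply Finset.sum_pos
    · intro i hi
      have := norm_pos_iff.mpr ((hs t i).mpr hi); positivity
    · rw [← Finset.card_pos, hcard]; norm_num
  set p : T → ι → ℝ := fun t i => ‖A t i‖ ^ 2 * Real.exp (x i) / R t with hp
  have hp0 : ∀ t i, i ∉ s t → p t i = 0 := by
    intro t i hi
    have : A t i = 0 := by
      by_contra h
      exact hi ((hs t i).mp h)
    simp [hp, this]
  have hpnn : ∀ t i, 0 ≤ p t i := fun t i => by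
    have := hRpos t
    simp only [hp]; positivity
  have hpc : ∀ i, ∑ t, w t * p t i = (n - 1) / 6 := by
    intro i
    rw [← hdeg i, ← hx i]
    refine Finset.sum_congr rfl fun t _ => ?_
    by_cases hi : i ∈ s t
    · simp [hi, hp, hR]
    · simp [hi, hp0 t i hi]
  have hps : ∀ t, ∑ i ∈ s t, p t i = 1 := by
    intro t
    simp only [hp]
    rw [← Finset.sum_div, div_self (hRpos t).ne']
  have hpu : ∀ t, ∑ i, p t i = 1 := by
    intro t
    rw [← hps t]
    symm
    exact Finset.sum_subset (Finset.subset_univ _) fun i _ hi => hp0 t i hi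
  have hpsq : ∀ t, 1 / 3 ≤ ∑ i, p t i ^ 2 := by
    intro t
    have h1 := sq_sum_le_card_mul_sum_sq (s := s t) (f := p t)
    rw [hps, hcard] at h1
    have h2 : ∑ i ∈ s t, p t i ^ 2 ≤ ∑ i, p t i ^ 2 :=
      Finset.sum_le_sum_of_subset_of_nonneg (Finset.subset_univ _) fun i _ _ => sq_nonneg _
    push_cast at h1
    linarith
  set B : Matrix T ι ℂ := Matrix.diagonal (fun t => ((Real.sqrt (w t / R t) : ℝ) : ℂ)) * A *
    Matrix.diagonal (fun i => ((Real.sqrt (Real.exp (x i)) : ℝ) : ℂ)) with hB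
  have hBrank : B.rank ≤ A.rank :=
    (Matrix.rank_mul_le_left _ _).trans (Matrix.rank_mul_le_right _ _)
  have hBn : ∀ t i, ‖B t i‖ ^ 2 = w t * p t i := by
    intro t i
    have h1 : 0 ≤ w t / R t := div_nonneg (hw t).le (hRpos t).le
    simp only [hB, Matrix.mul_diagonal, Matrix.diagonal_mul, norm_mul, mul_pow,
      Complex.norm_real, Real.norm_eq_abs, sq_abs, Real.sq_sqrt h1, Real.sq_sqrt (Real.exp_pos _).le, hp]
    ring
  set M : Matrix ι ι ℂ := Bᴴ * B with hM
  have hMH : M.IsHermitian := Matrix.isHermitian_conjTranspose_mul_self B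
  have hMr : (M.rank : ℝ) ≤ n - 4 := by
    have : M.rank ≤ A.rank := (Matrix.rank_mul_le_right _ _).trans hBrank
    have : (M.rank : ℝ) ≤ A.rank := by exact_mod_cast this
    linarith
  have hMd : ∀ i, M i i = (((n - 1) / 6 : ℝ) : ℂ) := by
    intro i
    rw [← hpc i]
    simp only [hM, Matrix.mul_apply, Matrix.conjTranspose_apply]
    push_cast
    refine Finset.sum_congr rfl fun t _ => ?_
    have := hBn t i
    rw [← Complex.ofReal_mul, ← this]
    simp [← Complex.conj_mul']
  have hMo : ∀ i j, i ≠ j → ‖M i j‖ ^ 2 ≤ ∑ t, w t * (p t i * p t j) := by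
    intro i j hij
    have h1 : ‖M i j‖ ≤ ∑ t, ‖B t i‖ * ‖B t j‖ := by
      simp only [hM, Matrix.mul_apply, Matrix.conjTranspose_apply]
      refine (norm_sum_le _ _).trans (le_of_eq ?_)
      refine Finset.sum_congr rfl fun t _ => ?_
      rw [norm_mul, norm_star]
    have h2 : (∑ t, ‖B t i‖ * ‖B t j‖) ^ 2 ≤
        (∑ t, w t * (if i ∈ s t ∧ j ∈ s t then 1 else 0)) * ∑ t, w t * (p t i * p t j) := by
      refine Finset.sum_sq_le_sum_mul_sum_of_sq_le_mul _ ?_ ?_ ?_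
      · intro t _
        have := (hw t).le
        positivity
      · intro t _
        exact mul_nonneg (hw t).le (mul_nonneg (hpnn t i) (hpnn t j))
      · intro t _
        refine le_of_eq ?_
        rw [mul_pow, hBn, hBn]
        by_cases hi : i ∈ s t
        · by_cases hj : j ∈ s t
          · simp [hi, hj]; ring
          · simp [hp0 t j hj]
        · simp [hp0 t i hi]
    rw [hpair i j hij, one_mul] at h2
    exact (pow_le_pow_left₀ (norm_nonneg _) h1 2).trans h2
  have hF : ∑ i, ∑ j, ‖M i j‖ ^ 2 ≤ n * ((n - 1) / 6) ^ 2 + (2 / 3) * ∑ t, w t := by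
    have h1 : ∀ i j, ‖M i j‖ ^ 2 ≤ (if i = j then ((n - 1) / 6) ^ 2 else 0) +
        ((∑ t, w t * (p t i * p t j)) - if i = j then ∑ t, w t * (p t i * p t i) else 0) := by
      intro i j
      by_cases hij : i = j
      · subst hij
        rw [hMd, Complex.norm_real, Real.norm_eq_abs, sq_abs]
        simp
      · simpa [hij] using hMo i j hij
    refine (Finset.sum_le_sum fun i _ => Finset.sum_le_sum fun j _ => h1 i j).trans ?_
    simp only [Finset.sum_add_distrib, Finset.sum_sub_distrib, Finset.sum_ite_eq, Finset.mem_univ,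
      if_true, Finset.sum_const, Finset.card_univ, nsmul_eq_mul]
    have h2 : ∑ i, ∑ j, ∑ t, w t * (p t i * p t j) = ∑ t, w t := by
      have : ∀ i, ∑ j, ∑ t, w t * (p t i * p t j) = ∑ t, w t * p t i := by
        intro i
        rw [Finset.sum_comm]
        refine Finset.sum_congr rfl fun t _ => ?_
        rw [← Finset.mul_sum, ← Finset.mul_sum, hpu, mul_one]
      simp only [this]
      rw [Finset.sum_comm]
      refine Finset.sum_congr rfl fun t _ => ?_
      rw [← Finset.mul_sum, hpu, mul_one]
    have h3 : (1 / 3) * ∑ t, w t ≤ ∑ i, ∑ t, w t * (p t i * p t i) := by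
      rw [Finset.sum_comm, Finset.mul_sum]
      refine Finset.sum_le_sum fun t _ => ?_
      rw [← Finset.mul_sum, mul_comm]
      refine mul_le_mul_of_nonneg_left ?_ (hw t).le
      simpa [sq] using hpsq t
    rw [h2]
    linarith
  have hW : ∑ t, w t = n * ((n - 1) / 6) := by
    have h1 : ∑ i, ∑ t, w t * p t i = n * ((n - 1) / 6) := by
      simp only [hpc, Finset.sum_const, Finset.card_univ, nsmul_eq_mul, hn]
    rw [← h1, Finset.sum_comm]
    refine Finset.sum_congr rfl fun t _ => ?_
    rw [← Finset.mul_sum, hpu, mul_one]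
  have htr : ∑ i, (M i i).re = n * ((n - 1) / 6) := by
    simp only [hMd, Complex.ofReal_re, Finset.sum_const, Finset.card_univ, nsmul_eq_mul, hn]
  have key := ek_trace_sq_le M hMH
  rw [htr] at key
  rw [hW] at hF
  have hn4' : 4 ≤ n := by
    have : (0:ℝ) ≤ A.rank := by positivity
    linarith
  set c := (n - 1) / 6 with hc
  have hc0 : 0 < c := by rw [hc]; linarith
  have hnn : n = 6 * c + 1 := by rw [hc]; ring
  have h5 : (n * c) ^ 2 ≤ (n - 4) * (n * c ^ 2 + 2 / 3 * (n * c)) := by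
    refine key.trans ?_
    refine mul_le_mul hMr hF ?_ (by linarith)
    positivity
  have h6 : (n * c) * (n * c) ≤ (n * c) * ((n - 4) * (c + 2 / 3)) := by nlinarith
  have h7 := le_of_mul_le_mul_left h6 (by positivity)
  nlinarith

lemma ek_kelly {ι Q : Type*} [Fintype ι] [AddCommGroup Q] [Module ℂ Q]
    (v : ι → Q) (hv : ∀ i j, i ≠ j → v i ∉ Submodule.span ℂ {v j})
    (hsg : ∀ i j, i ≠ j → ∃ k, k ≠ i ∧ k ≠ j ∧ v k ∈ Submodule.span ℂ {v i, v j}) :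
    Module.finrank ℂ (Submodule.span ℂ (Set.range v)) ≤ 3 := by
  classical
  let T := {t : Finset ι // t.card = 3 ∧ ∃ a : ι → ℂ, (∀ i, a i ≠ 0 ↔ i ∈ t) ∧ ∑ i, a i • v i = 0}
  have hTc : ∀ i j k, i ≠ j → k ≠ i → k ≠ j → v k ∈ Submodule.span ℂ {v i, v j} →
      ∃ t : T, t.1 = {i, j, k} := by
    intro i j k hij hki hkj hk
    obtain ⟨a, b, hab⟩ := Submodule.mem_span_pair.mp hk
    refine ⟨⟨{i, j, k}, Finset.card_eq_three.mpr ⟨i, j, k, hij, hki.symm, hkj.symm, rfl⟩,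
      fun l => if l = i then a else if l = j then b else if l = k then -1 else 0, ?_, ?_⟩, rfl⟩
    · have ha : a ≠ 0 := by
        rintro rfl
        exact hv k j hkj (Submodule.mem_span_singleton.mpr ⟨b, by simpa using hab⟩)
      have hb : b ≠ 0 := by
        rintro rfl
        exact hv k i hki (Submodule.mem_span_singleton.mpr ⟨a, by simpa using hab⟩)
      intro l
      simp only [Finset.mem_insert, Finset.mem_singleton]
      split_ifs <;> simp_all
    · rw [← Finset.sum_subset (Finset.subset_univ {i, j, k})]
      · rw [Finset.sum_insert (by simp [hij, hki.symm]), Finset.sum_insert (by simp [hkj.symm]),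
          Finset.sum_singleton]
        simp only [if_true, hij.symm, hki, hkj, if_false, ← hab]
        module
      · intro l _ hl
        simp only [Finset.mem_insert, Finset.mem_singleton, not_or] at hl
        simp [hl.1, hl.2.1, hl.2.2]
  have hTs : ∀ t : T, ∀ i ∈ t.1, ∀ j ∈ t.1, i ≠ j →
      Submodule.span ℂ (v '' (t.1 : Set ι)) = Submodule.span ℂ {v i, v j} := by
    rintro ⟨t, hc, a, ha, hsum⟩ i hi j hj hij
    simp only at hi hj ⊢
    apply le_antisymm
    · rw [Submodule.span_le]
      rintro _ ⟨k, hk, rfl⟩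
      by_cases hki : k = i
      · subst hki; exact Submodule.subset_span (by simp)
      by_cases hkj : k = j
      · subst hkj; exact Submodule.subset_span (by simp)
      have ht : {i, j, k} = t := by
        apply Finset.eq_of_subset_of_card_le
        · intro l hl
          simp only [Finset.mem_insert, Finset.mem_singleton] at hl
          rcases hl with rfl | rfl | rfl <;> assumption
        · rw [hc, Finset.card_eq_three.mpr ⟨i, j, k, hij, Ne.symm hki, Ne.symm hkj, rfl⟩]
      rw [← Finset.sum_subset (Finset.subset_univ {i, j, k})] at hsum
      · rw [Finset.sum_insert (by simp [hij, Ne.symm hki]),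
          Finset.sum_insert (by simp [Ne.symm hkj]), Finset.sum_singleton] at hsum
        have hak : a k ≠ 0 := (ha k).mpr hk
        refine Submodule.mem_span_pair.mpr ⟨-(a k)⁻¹ * a i, -(a k)⁻¹ * a j, ?_⟩
        have h2 : a i • v i + a j • v j = -(a k • v k) := by
          rw [eq_neg_iff_add_eq_zero, ← hsum]; abel
        rw [mul_smul, mul_smul, ← smul_add, h2, smul_neg, neg_smul, neg_neg, smul_smul,
          inv_mul_cancel₀ hak, one_smul]
      · intro l _ hl
        rw [ht] at hl
        have : a l = 0 := by
          by_contra h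
          exact hl ((ha l).mp h)
        rw [this, zero_smul]
    · apply Submodule.span_mono
      rintro _ (rfl | rfl)
      · exact ⟨i, hi, rfl⟩
      · exact ⟨j, hj, rfl⟩
  choose A hA hA0 using fun t : T => t.2.2
  let F : Submodule ℂ Q → Finset ι := fun U => Finset.univ.filter fun k => v k ∈ U
  have hw : ∀ t : T, (0 : ℝ) < 1 / (((F (Submodule.span ℂ (v '' (t.1 : Set ι)))).card : ℝ) - 2) := by
    intro t
    have h1 : t.1 ⊆ F (Submodule.span ℂ (v '' (t.1 : Set ι))) := by
      intro k hk
      simp only [F, Finset.mem_filter, Finset.mem_univ, true_and]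
      exact Submodule.subset_span ⟨k, hk, rfl⟩
    have h2 := Finset.card_le_card h1
    rw [t.2.1] at h2
    have h3 : (3 : ℝ) ≤ ((F (Submodule.span ℂ (v '' (t.1 : Set ι)))).card : ℝ) := by exact_mod_cast h2
    apply one_div_pos.mpr
    linarith
  have key := ek_design (Matrix.of A) (fun t : T => t.1) hA (fun t => t.2.1) _ hw ?_
  · have h1 : (Matrix.of A).rank ≤ Module.finrank ℂ (LinearMap.ker (Fintype.linearCombination ℂ v)) := by
      rw [Matrix.rank_eq_finrank_span_row]
      apply Submodule.finrank_mono
      rw [Submodule.span_le]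
      rintro _ ⟨t, rfl⟩
      have := hA0 t
      simpa [Fintype.linearCombination_apply] using this
    have h2 := LinearMap.finrank_range_add_finrank_ker (Fintype.linearCombination ℂ v)
    rw [Fintype.range_linearCombination, Module.finrank_fintype_fun_eq_card] at h2
    omega
  · intro i j hij
    set U := Submodule.span ℂ {v i, v j} with hU
    have hiF : i ∈ F U := by
      simp only [F, Finset.mem_filter, Finset.mem_univ, true_and]
      exact Submodule.subset_span (by simp)
    have hjF : j ∈ F U := by
      simp only [F, Finset.mem_filter, Finset.mem_univ, true_and]
      exact Submodule.subset_span (by simp)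
    have h1 : ∀ t : T, 1 / (((F (Submodule.span ℂ (v '' (t.1 : Set ι)))).card : ℝ) - 2) *
        (if i ∈ t.1 ∧ j ∈ t.1 then 1 else 0) =
        if i ∈ t.1 ∧ j ∈ t.1 then 1 / (((F U).card : ℝ) - 2) else 0 := by
      intro t
      split_ifs with h
      · rw [hTs t i h.1 j h.2 hij, mul_one]
      · rw [mul_zero]
    rw [Finset.sum_congr rfl (fun t _ => h1 t), ← Finset.sum_filter, Finset.sum_const]
    have hcard : (((F U).erase i).erase j).card =
        (Finset.univ.filter fun t : T => i ∈ t.1 ∧ j ∈ t.1).card := by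
      have hex : ∀ k ∈ ((F U).erase i).erase j, ∃ t : T, t.1 = {i, j, k} := by
        intro k hk
        simp only [F, Finset.mem_erase, Finset.mem_filter, Finset.mem_univ, true_and] at hk
        exact hTc i j k hij hk.2.1 hk.1 hk.2.2
      obtain ⟨k0, hk01, hk02, hk03⟩ := hsg i j hij
      obtain ⟨t0, -⟩ := hTc i j k0 hij hk01 hk02 hk03
      have : Nonempty T := ⟨t0⟩
      choose! g hg using hex
      refine Finset.card_bij (fun k _ => g k) ?_ ?_ ?_
      · intro k hk
        simp [hg k hk]
      · intro k hk k' hk' heq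
        have h2 : ({i, j, k} : Finset ι) = {i, j, k'} := by
          rw [← hg k hk, ← hg k' hk']
          rw [heq]
        have h3 : k ∈ ({i, j, k'} : Finset ι) := by rw [← h2]; simp
        simp only [Finset.mem_erase] at hk
        simpa [hk.1, hk.2.1] using h3
      · intro t ht
        simp only [Finset.mem_filter, Finset.mem_univ, true_and] at ht
        have h4 : ((t.1.erase i).erase j).card = 1 := by
          rw [Finset.card_erase_of_mem (by simp [hij.symm, ht.2]), Finset.card_erase_of_mem ht.1,
            t.2.1]
        obtain ⟨k, hk⟩ := Finset.card_eq_one.mp h4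
        have hkm : k ∈ (t.1.erase i).erase j := by rw [hk]; simp
        simp only [Finset.mem_erase] at hkm
        have hkF : k ∈ ((F U).erase i).erase j := by
          simp only [F, Finset.mem_erase, Finset.mem_filter, Finset.mem_univ, true_and]
          refine ⟨hkm.1, hkm.2.1, ?_⟩
          rw [hU, ← hTs t i ht.1 j ht.2 hij]
          exact Submodule.subset_span ⟨k, hkm.2.2, rfl⟩
        refine ⟨k, hkF, ?_⟩
        apply Subtype.ext
        rw [hg k hkF, ← hk, Finset.insert_erase (by simp [hij.symm, ht.2]),
          Finset.insert_erase ht.1]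
    obtain ⟨k, hki, hkj, hk⟩ := hsg i j hij
    have hpos : 0 < (((F U).erase i).erase j).card := by
      apply Finset.card_pos.mpr
      exact ⟨k, by simpa [F, hki, hkj] using hk⟩
    rw [← hcard]
    rw [Finset.card_erase_of_mem (by simp [hij.symm, hjF]), Finset.card_erase_of_mem hiF] at hpos ⊢
    have h5 : (((F U).card - 1 - 1 : ℕ) : ℝ) = ((F U).card : ℝ) - 2 := by
      rw [Nat.sub_sub, Nat.cast_sub (by omega)]; norm_num
    rw [nsmul_eq_mul, h5, mul_one_div, div_self]
    rw [← h5]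
    exact_mod_cast hpos.ne'

theorem affine_sets_span_five_exists_line_meeting_exactly_two
    (n m : ℕ) (hm : 2 ≤ m) (S : Fin m → Set (Fin n → ℂ))
    (hdisj : ∀ i j, i ≠ j → Disjoint (S i) (S j))
    (hne : ∀ i, (S i).Nonempty) (hfin : ∀ i, (S i).Finite)
    (hdim : 5 ≤ Module.finrank ℂ (affineSpan ℂ (⋃ i, S i)).direction) :
    ∃ ℓ : AffineSubspace ℂ (Fin n → ℂ), Module.finrank ℂ ℓ.direction = 1 ∧
      {i : Fin m | ((ℓ : Set (Fin n → ℂ)) ∩ S i).Nonempty}.encard = 2 := by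
  classical
  by_contra hcon
  have hcol : ∀ i j p, p ∈ S i → p ∈ S j → i = j := by
    intro i j p hi hj
    by_contra h
    exact Set.disjoint_left.mp (hdisj i j h) hi hj
  have third : ∀ i j p q, p ∈ S i → q ∈ S j → i ≠ j →
      ∃ k, k ≠ i ∧ k ≠ j ∧ ∃ c : ℂ, p + c • (q - p) ∈ S k := by
    intro i j p q hp hq hij
    by_contra hno
    push Not at hno
    apply hcon
    have hpq : p ≠ q := by
      rintro rfl
      exact hij (hcol i j p hp hq)
    refine ⟨line[ℂ, p, q], ?_, ?_⟩
    · rw [direction_affineSpan, vectorSpan_pair_rev]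
      exact finrank_span_singleton (by simpa [sub_eq_zero] using hpq.symm)
    · have : {i : Fin m | ((line[ℂ, p, q] : Set (Fin n → ℂ)) ∩ S i).Nonempty} = {i, j} := by
        ext k
        constructor
        · rintro ⟨z, hz, hzk⟩
          by_contra hk
          simp only [Set.mem_insert_iff, Set.mem_singleton_iff, not_or] at hk
          obtain ⟨c, rfl⟩ := mem_affineSpan_pair_iff_exists_lineMap_eq.mp hz
          apply hno k hk.1 hk.2 c
          rw [AffineMap.lineMap_apply] at hzk
          simpa [add_comm] using hzk
        · rintro (rfl | rfl)
          · exact ⟨p, left_mem_affineSpan_pair ℂ p q, hp⟩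
          · exact ⟨q, right_mem_affineSpan_pair ℂ p q, hq⟩
      rw [this, Set.encard_pair hij]
  obtain ⟨a, ha⟩ := hne ⟨0, by omega⟩
  obtain ⟨b, hb⟩ := hne ⟨1, by omega⟩
  set N : Submodule ℂ (Fin n → ℂ) := Submodule.span ℂ {b - a} with hN
  let φ : (Fin n → ℂ) → (Fin n → ℂ) ⧸ N := fun p => N.mkQ (p - a)
  have hφa : φ a = 0 := by simp [φ]
  have hφb : φ b = 0 := by
    simp only [φ, Submodule.mkQ_apply, Submodule.Quotient.mk_eq_zero]
    exact Submodule.mem_span_singleton_self _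
  have hφ : ∀ p q (c : ℂ), φ (p + c • (q - p)) = (1 - c) • φ p + c • φ q := by
    intro p q c
    simp only [φ, ← map_smul, ← map_add]
    congr 1
    module
  let P : Set (Fin n → ℂ) := {p | p ∈ ⋃ i, S i ∧ φ p ≠ 0}
  have hPfin : P.Finite := (Set.finite_iUnion hfin).subset fun p hp => hp.1
  let I : Set (Submodule ℂ ((Fin n → ℂ) ⧸ N)) := (fun p => Submodule.span ℂ {φ p}) '' P
  have hIfin : I.Finite := hPfin.image _
  have : Fintype I := hIfin.fintype
  choose r hrP hr using fun L : I => L.2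
  have hrs : ∀ L : I, Submodule.span ℂ {φ (r L)} = L.1 := hr
  -- span comparison
  have hsp : ∀ x y : (Fin n → ℂ) ⧸ N, x ≠ 0 → x ∈ Submodule.span ℂ {y} →
      Submodule.span ℂ {x} = Submodule.span ℂ {y} := by
    intro x y hx hxy
    obtain ⟨c, rfl⟩ := Submodule.mem_span_singleton.mp hxy
    have hc : c ≠ 0 := by rintro rfl; simp at hx
    exact Submodule.span_singleton_smul_eq (IsUnit.mk0 c hc) y
  have other : ∀ i p, p ∈ S i → φ p ≠ 0 → ∃ j q, j ≠ i ∧ q ∈ S j ∧ φ q ≠ 0 ∧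
      Submodule.span ℂ {φ q} = Submodule.span ℂ {φ p} := by
    intro i p hp hp0
    obtain ⟨j, d, hji, hd, hd0⟩ : ∃ j d, j ≠ i ∧ d ∈ S j ∧ φ d = 0 := by
      by_cases h : i = ⟨0, by omega⟩
      · exact ⟨_, b, by rw [h]; simp [Fin.ext_iff], hb, hφb⟩
      · exact ⟨_, a, Ne.symm h, ha, hφa⟩
    obtain ⟨k, hki, hkj, c, hz⟩ := third i j p d hp hd hji.symm
    have hc : (1 - c) ≠ 0 := by
      intro h
      have : c = 1 := by linear_combination -h
      subst this
      apply hkj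
      refine hcol k j d ?_ hd
      simpa using hz
    have hz' : φ (p + c • (d - p)) = (1 - c) • φ p := by rw [hφ, hd0]; simp
    refine ⟨k, _, hki, hz, ?_, ?_⟩
    · rw [hz']; exact smul_ne_zero hc hp0
    · rw [hz']; exact Submodule.span_singleton_smul_eq (IsUnit.mk0 _ hc) _
  have key := ek_kelly (fun L : I => φ (r L)) ?_ ?_
  · have hspan : Submodule.map N.mkQ (affineSpan ℂ (⋃ i, S i)).direction ≤
        Submodule.span ℂ (Set.range fun L : I => φ (r L)) := by
      rw [direction_affineSpan, vectorSpan_eq_span_vsub_set_right ℂ (Set.mem_iUnion_of_mem _ ha),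
        Submodule.map_span, Submodule.span_le]
      rintro _ ⟨_, ⟨p, hp, rfl⟩, rfl⟩
      change φ p ∈ _
      by_cases hp0 : φ p = 0
      · rw [hp0]; exact Submodule.zero_mem _
      let L : I := ⟨_, p, ⟨hp, hp0⟩, rfl⟩
      have h1 : φ p ∈ Submodule.span ℂ {φ (r L)} := by
        rw [hrs L]; exact Submodule.mem_span_singleton_self _
      refine Submodule.span_mono ?_ h1
      rintro _ rfl
      exact ⟨L, rfl⟩
    have h1 := Submodule.finrank_mono hspan
    set D := (affineSpan ℂ (⋃ i, S i)).direction with hD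
    have h2 := LinearMap.finrank_range_add_finrank_ker (N.mkQ.domRestrict D)
    rw [LinearMap.range_domRestrict] at h2
    have h3 : Module.finrank ℂ (LinearMap.ker (N.mkQ.domRestrict D)) ≤ Module.finrank ℂ N := by
      have h4 : ∀ x : LinearMap.ker (N.mkQ.domRestrict D), (x.1 : Fin n → ℂ) ∈ N := by
        rintro ⟨x, hx⟩
        simpa using hx
      let f : LinearMap.ker (N.mkQ.domRestrict D) →ₗ[ℂ] N :=
        LinearMap.codRestrict N (D.subtype ∘ₗ Submodule.subtype _) h4
      refine LinearMap.finrank_le_finrank_of_injective (f := f) ?_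
      intro x y hxy
      apply Subtype.ext
      apply Subtype.ext
      exact congrArg (fun u : N => (u : Fin n → ℂ)) hxy
    have h5 : Module.finrank ℂ N ≤ 1 := by
      rw [hN]
      exact (finrank_span_le_card _).trans (by simp)
    omega
  · intro L L' hLL h
    apply hLL
    apply Subtype.ext
    rw [← hrs L, ← hrs L']
    exact hsp _ _ (hrP L).2 h
  · intro L L' hLL
    obtain ⟨i, p, hp, hp0, hpL⟩ : ∃ i p, p ∈ S i ∧ φ p ≠ 0 ∧ Submodule.span ℂ {φ p} = L.1 := by
      obtain ⟨i, hi⟩ := Set.mem_iUnion.mp (hrP L).1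
      exact ⟨i, r L, hi, (hrP L).2, hrs L⟩
    obtain ⟨j, q, hij, hq, hq0, hqL⟩ : ∃ j q, i ≠ j ∧ q ∈ S j ∧ φ q ≠ 0 ∧
        Submodule.span ℂ {φ q} = L'.1 := by
      obtain ⟨j, hj⟩ := Set.mem_iUnion.mp (hrP L').1
      by_cases hij : i = j
      · obtain ⟨k, q, hk, hq, hq0, hqs⟩ := other j (r L') hj (hrP L').2
        exact ⟨k, q, by rw [hij]; exact hk.symm, hq, hq0, hqs.trans (hrs L')⟩
      · exact ⟨j, r L', hij, hj, (hrP L').2, hrs L'⟩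
    obtain ⟨k, hki, hkj, c, hz⟩ := third i j p q hp hq hij
    have hc0 : c ≠ 0 := by
      rintro rfl
      exact hki (hcol k i p (by simpa using hz) hp)
    have hc1 : 1 - c ≠ 0 := by
      intro h
      have : c = 1 := by linear_combination -h
      subst this
      exact hkj (hcol k j q (by simpa using hz) hq)
    have hne' : L.1 ≠ L'.1 := fun h => hLL (Subtype.ext h)
    -- nondegeneracy
    have hq_not : φ q ∉ Submodule.span ℂ {φ p} := by
      intro h
      exact hne' (by rw [← hpL, ← hqL, hsp _ _ hq0 h])
    have hp_not : φ p ∉ Submodule.span ℂ {φ q} := by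
      intro h
      exact hne' (by rw [← hpL, ← hqL, hsp _ _ hp0 h])
    set z := p + c • (q - p) with hzdef
    have hzφ : φ z = (1 - c) • φ p + c • φ q := hφ p q c
    have hz_p : φ z ∉ Submodule.span ℂ {φ p} := by
      intro h
      rw [hzφ, Submodule.add_mem_iff_right _
        (Submodule.smul_mem _ _ (Submodule.mem_span_singleton_self _)),
        Submodule.smul_mem_iff _ hc0] at h
      exact hq_not h
    have hz_q : φ z ∉ Submodule.span ℂ {φ q} := by
      intro h
      rw [hzφ, Submodule.add_mem_iff_left _
        (Submodule.smul_mem _ _ (Submodule.mem_span_singleton_self _)),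
        Submodule.smul_mem_iff _ hc1] at h
      exact hp_not h
    have hz0 : φ z ≠ 0 := by
      intro h
      apply hz_p
      rw [h]; exact Submodule.zero_mem _
    let K : I := ⟨_, z, ⟨Set.mem_iUnion_of_mem k hz, hz0⟩, rfl⟩
    have hzK : φ z ∈ K.1 := Submodule.mem_span_singleton_self _
    refine ⟨K, ?_, ?_, ?_⟩
    · intro h
      rw [h, ← hpL] at hzK
      exact hz_p hzK
    · intro h
      rw [h, ← hqL] at hzK
      exact hz_q hzK
    · have h1 : φ (r K) ∈ Submodule.span ℂ {φ z} := by
        have := hrs K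
        have h2 : φ (r K) ∈ K.1 := by rw [← this]; exact Submodule.mem_span_singleton_self _
        exact h2
      obtain ⟨e, he⟩ := Submodule.mem_span_singleton.mp h1
      rw [← he, hzφ]
      apply Submodule.smul_mem
      have h3 : φ p ∈ Submodule.span ℂ {φ (r L), φ (r L')} := by
        have : φ p ∈ Submodule.span ℂ {φ (r L)} := by
          rw [hrs L, ← hpL]; exact Submodule.mem_span_singleton_self _
        exact Submodule.span_mono (by simp) this
      have h4 : φ q ∈ Submodule.span ℂ {φ (r L), φ (r L')} := by
        have : φ q ∈ Submodule.span ℂ {φ (r L')} := by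
          rw [hrs L', ← hqL]; exact Submodule.mem_span_singleton_self _
        exact Submodule.span_mono (by simp) this
      exact Submodule.add_mem _ (Submodule.smul_mem _ _ h3) (Submodule.smul_mem _ _ h4)
end

section
/- Let m ≥ 2 and let S_1, …, S_m be pairwise disjoint, non-empty, finite subsets of the complex projective space ℙ(ℂ^{n+1}). If the union S_1 ∪ … ∪ S_m is not contained in any projective subspace of dimension 4 (i.e., the homogeneous vectors representing the points span a linear subspace of ℂ^{n+1} of dimension at least 6), then there exists a projective line ℓ such that ℓ intersects exactly two of the sets S_1, …, S_m (i.e., the set of indices i with ℓ ∩ S_i ≠ ∅ has exactly two elements). -/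
open Finset in
theorem kel_scaling {ι R : Type} [Fintype ι] [Fintype R] [DecidableEq ι]
    (X : R → ι → ℝ) (supp : R → Finset ι) (hcard : ∀ r, (supp r).card = 3)
    (hX : ∀ r i, i ∈ supp r → 0 < X r i) (hX0 : ∀ r i, i ∉ supp r → X r i = 0)
    (w : R → ℝ) (hw : ∀ r, 0 < w r)
    (conn : ∀ i j, i ≠ j → ∃ r, i ∈ supp r ∧ j ∈ supp r) :
    ∃ t : ι → ℝ, ∀ i, ∑ r, w r * (X r i * Real.exp (t i) / ∑ k, X r k * Real.exp (t k))
      = ∑ r, if i ∈ supp r then w r / 3 else 0 := by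
  have hXnn : ∀ r i, 0 ≤ X r i := by
    intro r i
    by_cases h : i ∈ supp r
    · exact (hX r i h).le
    · rw [hX0 r i h]
  have hne : ∀ r, (supp r).Nonempty := fun r => by
    rw [← Finset.card_pos, hcard]; norm_num
  have hpos : ∀ r (t : ι → ℝ), 0 < ∑ k, X r k * Real.exp (t k) := by
    intro r t
    obtain ⟨a, ha⟩ := hne r
    exact Finset.sum_pos' (fun k _ => mul_nonneg (hXnn r k) (Real.exp_pos _).le)
      ⟨a, mem_univ _, mul_pos (hX r a ha) (Real.exp_pos _)⟩
  let G : R → (ι → ℝ) → ℝ := fun r t =>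
    Real.log (∑ k, X r k * Real.exp (t k)) - (1/3) * ∑ k ∈ supp r, t k
  let F : (ι → ℝ) → ℝ := fun t => ∑ r, w r * G r t
  have hG : ∀ r, ∃ C : ℝ, ∀ t : ι → ℝ, ∀ i ∈ supp r, ∀ j ∈ supp r,
      C + (t i - t j) / 3 ≤ G r t := by
    intro r
    obtain ⟨m, hm, hmin⟩ := Finset.exists_min_image (supp r) (X r) (hne r)
    refine ⟨Real.log (X r m), ?_⟩
    intro t i hi j hj
    obtain ⟨a, ha, hmax⟩ := Finset.exists_max_image (supp r) t (hne r)
    have h1 : Real.log (X r m) + t a ≤ Real.log (∑ k, X r k * Real.exp (t k)) := by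
      have h0 : Real.log (X r m) + t a = Real.log (X r m * Real.exp (t a)) := by
        rw [Real.log_mul (hX r m hm).ne' (Real.exp_pos _).ne', Real.log_exp]
      rw [h0]
      apply Real.log_le_log (mul_pos (hX r m hm) (Real.exp_pos _))
      calc X r m * Real.exp (t a) ≤ X r a * Real.exp (t a) := by
            gcongr
            exact hmin a ha
        _ ≤ _ := Finset.single_le_sum (f := fun k => X r k * Real.exp (t k))
            (fun k _ => mul_nonneg (hXnn r k) (Real.exp_pos _).le) (mem_univ a)
    have h2 : t a - t j ≤ ∑ k ∈ supp r, (t a - t k) :=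
      Finset.single_le_sum (f := fun k => t a - t k)
        (fun k hk => sub_nonneg.2 (hmax k hk)) hj
    rw [Finset.sum_sub_distrib, Finset.sum_const, hcard] at h2
    have h3 := hmax i hi
    simp only [nsmul_eq_mul] at h2
    push_cast at h2
    simp only [G]
    linarith
  choose C hC using hG
  have hGC : ∀ r t, C r ≤ G r t := by
    intro r t
    obtain ⟨a, ha⟩ := hne r
    have := hC r t a ha a ha
    simpa using this
  have hshift : ∀ t (c : ℝ), F (fun k => t k - c) = F t := by
    intro t c
    refine Finset.sum_congr rfl fun r _ => ?_
    congr 1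
    have : ∑ k, X r k * Real.exp (t k - c) = (∑ k, X r k * Real.exp (t k)) * Real.exp (-c) := by
      rw [Finset.sum_mul]
      refine Finset.sum_congr rfl fun k _ => ?_
      rw [sub_eq_add_neg, Real.exp_add]; ring
    simp only [G]
    rw [this, Real.log_mul (hpos r t).ne' (Real.exp_pos _).ne', Real.log_exp,
      Finset.sum_sub_distrib, Finset.sum_const, hcard]
    simp only [nsmul_eq_mul]
    push_cast
    ring
  have hcont : Continuous F := by
    refine continuous_finsetSum _ fun r _ => ?_
    refine continuous_const.mul ?_
    refine Continuous.sub ?_ (by fun_prop)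
    exact Continuous.log (by fun_prop) (fun t => (hpos r t).ne')
  cases isEmpty_or_nonempty ι with
  | inl h => exact ⟨0, fun i => (IsEmpty.false i).elim⟩
  | inr h =>
  obtain ⟨i0⟩ := h
  have hmin : ∃ t, ∀ t', F t ≤ F t' := by
    let C0 := ∑ r, w r * C r
    have key : ∀ r, ∃ B, ∀ t : ι → ℝ, F t ≤ F 0 → ∀ i ∈ supp r, ∀ j ∈ supp r, t i - t j ≤ B := by
      intro r
      refine ⟨3 * ((F 0 - C0) / w r), fun t ht i hi j hj => ?_⟩
      have h1 : w r * (G r t - C r) ≤ ∑ r, w r * (G r t - C r) :=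
        Finset.single_le_sum (f := fun r => w r * (G r t - C r))
          (fun r _ => mul_nonneg (hw r).le (sub_nonneg.2 (hGC r t))) (mem_univ r)
      have h2 : ∑ r, w r * (G r t - C r) = F t - C0 := by
        simp only [mul_sub, Finset.sum_sub_distrib, F, C0]
      have h3 := hC r t i hi j hj
      have h4 : (G r t - C r) ≤ (F 0 - C0) / w r := by
        rw [le_div_iff₀ (hw r)]
        linarith
      linarith
    choose B hB using key
    let BB := ∑ r, |B r|
    have hbox : ∀ t : ι → ℝ, t i0 = 0 → F t ≤ F 0 → t ∈ Set.pi Set.univ (fun _ : ι => Set.Icc (-BB) BB) := by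
      intro t h0 ht i _
      have hBB : ∀ r, B r ≤ BB := fun r => (le_abs_self _).trans
        (Finset.single_le_sum (f := fun r => |B r|) (fun r _ => abs_nonneg _) (mem_univ r))
      by_cases hi : i = i0
      · subst hi
        rw [h0]
        have : 0 ≤ BB := Finset.sum_nonneg fun r _ => abs_nonneg _
        exact ⟨by linarith, this⟩
      · obtain ⟨r, h1, h2⟩ := conn i i0 hi
        have a1 := hB r t ht i h1 i0 h2
        have a2 := hB r t ht i0 h2 i h1
        have := hBB r
        rw [h0] at a1 a2
        exact ⟨by linarith, by linarith⟩
    have hcomp : IsCompact (Set.pi Set.univ (fun _ : ι => Set.Icc (-BB) BB)) :=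
      isCompact_univ_pi fun _ => isCompact_Icc
    obtain ⟨t, ht, htm⟩ := hcomp.exists_isMinOn ⟨0, hbox 0 rfl le_rfl⟩ hcont.continuousOn
    refine ⟨t, fun t' => ?_⟩
    rw [← hshift t' (t' i0)]
    by_cases hle : F (fun k => t' k - t' i0) ≤ F 0
    · exact htm (hbox _ (sub_self _) hle)
    · exact (htm (hbox 0 rfl le_rfl)).trans (not_le.1 hle).le
  obtain ⟨t, ht⟩ := hmin
  refine ⟨t, fun i => ?_⟩
  let e : ι → ℝ := fun k => if k = i then 1 else 0
  let φ : ℝ → ℝ := fun s => F (fun k => t k + s * e k)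
  have hd : HasDerivAt φ (∑ r, w r * ((∑ k, X r k * (Real.exp (t k) * e k)) /
      (∑ k, X r k * Real.exp (t k)) - (1/3) * ∑ k ∈ supp r, e k)) 0 := by
    refine HasDerivAt.fun_sum fun r _ => ?_
    refine HasDerivAt.const_mul _ ?_
    have hlin : ∀ k, HasDerivAt (fun s : ℝ => t k + s * e k) (e k) 0 := fun k => by
      simpa using ((hasDerivAt_id (0:ℝ)).mul_const (e k)).const_add (t k)
    refine HasDerivAt.sub ?_ ?_
    · have h1 : HasDerivAt (fun s : ℝ => ∑ k, X r k * Real.exp (t k + s * e k))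
          (∑ k, X r k * (Real.exp (t k) * e k)) 0 := by
        refine HasDerivAt.fun_sum fun k _ => ?_
        refine HasDerivAt.const_mul _ ?_
        simpa using (hlin k).exp
      have h2 := h1.log (by simpa using (hpos r t).ne')
      simpa using h2
    · refine HasDerivAt.const_mul _ ?_
      exact HasDerivAt.fun_sum fun k _ => hlin k
  have hmin0 : IsLocalMin φ 0 := by
    refine Filter.Eventually.of_forall fun s => ?_
    have : φ 0 = F t := by simp [φ]
    rw [this]
    exact ht _
  have h0 := hmin0.hasDerivAt_eq_zero hd
  simp only [mul_sub, Finset.sum_sub_distrib] at h0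
  have h1 := sub_eq_zero.1 h0
  simp only [e, mul_ite, mul_one, mul_zero, Finset.sum_ite_eq', mem_univ, if_true] at h1
  rw [h1]
  refine Finset.sum_congr rfl fun r _ => ?_
  split_ifs <;> ring

open Finset in
theorem kel_core {ι R : Type} [Fintype ι] [Fintype R] [DecidableEq ι]
    (B : R → ι → ℂ) (supp : R → Finset ι) (hcard : ∀ r, (supp r).card = 3)
    (hB0 : ∀ r i, i ∉ supp r → B r i = 0)
    (w : R → ℝ) (hw : ∀ r, 0 < w r)
    (hpair : ∀ i j, i ≠ j → ∑ r, (if i ∈ supp r ∧ j ∈ supp r then w r else 0) = 1)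
    (hrow : ∀ r, ∑ i, ‖B r i‖ ^ 2 = 1) (s : ℝ)
    (hs : 6 * s = Fintype.card ι - 1)
    (hcol : ∀ i, ∑ r, w r * ‖B r i‖ ^ 2 = s)
    (U : Matrix ι (Fin 4) ℂ) (hU : U.conjTranspose * U = 1)
    (hBU : ∀ r k, ∑ i, B r i * U i k = 0) : False := by
  obtain ⟨M, hMa⟩ : ∃ M : Matrix ι ι ℂ, ∀ i j, M i j = ∑ r, (w r : ℂ) * (star (B r i) * B r j) :=
    ⟨Matrix.of fun i j => ∑ r, (w r : ℂ) * (star (B r i) * B r j), fun i j => rfl⟩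
  have hM : M.conjTranspose = M := by
    ext i j
    simp only [Matrix.conjTranspose_apply, hMa, star_sum, star_mul', star_star]
    refine Finset.sum_congr rfl fun r _ => ?_
    have : star (w r : ℂ) = w r := Complex.conj_ofReal _
    rw [this]; ring
  have hMU : M * U = 0 := by
    ext i k
    simp only [Matrix.mul_apply, hMa, Finset.sum_mul, Matrix.zero_apply]
    rw [Finset.sum_comm]
    refine Finset.sum_eq_zero fun r _ => ?_
    have : ∀ j, (w r : ℂ) * (star (B r i) * B r j) * U j k
        = ((w r : ℂ) * star (B r i)) * (B r j * U j k) := fun j => by ring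
    simp only [this, ← Finset.mul_sum, hBU, mul_zero]
  have hUM : U.conjTranspose * M = 0 := by
    have := congrArg Matrix.conjTranspose hMU
    rwa [Matrix.conjTranspose_mul, hM, Matrix.conjTranspose_zero] at this
  let Q : Matrix ι ι ℂ := 1 - U * U.conjTranspose
  have hMQ : M * Q = M := by
    simp only [Q, Matrix.mul_sub, ← Matrix.mul_assoc, hMU]; simp
  have hQM : Q * M = M := by
    simp only [Q, Matrix.sub_mul, Matrix.mul_assoc, hUM]; simp
  have hQQ : Q * Q = Q := by
    have : Q * (U * U.conjTranspose) = 0 := by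
      simp only [Q, Matrix.sub_mul, Matrix.one_mul]
      rw [Matrix.mul_assoc U, ← Matrix.mul_assoc U.conjTranspose, hU]; simp
    conv_lhs => rw [show Q * Q = Q * 1 - Q * (U * U.conjTranspose) by rw [← Matrix.mul_sub]]
    rw [this]; simp
  have hQ : Q.conjTranspose = Q := by
    simp [Q, Matrix.conjTranspose_sub, Matrix.conjTranspose_mul]
  have htrQ : Q.trace = (Fintype.card ι : ℂ) - 4 := by
    simp only [Q, Matrix.trace_sub, Matrix.trace_one]
    rw [Matrix.trace_mul_comm, hU]; simp
  have hdiag : ∀ i, M i i = (s : ℂ) := by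
    intro i
    rw [← hcol i, hMa]
    push_cast
    refine Finset.sum_congr rfl fun r _ => ?_
    congr 1
    exact Complex.conj_mul' _
  have htrM : M.trace = ((Fintype.card ι * s : ℝ) : ℂ) := by
    simp [Matrix.trace, hdiag]
  have hfro : ∀ N : Matrix ι ι ℂ, (N.conjTranspose * N).trace = ((∑ i, ∑ j, ‖N i j‖ ^ 2 : ℝ) : ℂ) := by
    intro N
    simp only [Matrix.trace, Matrix.diag, Matrix.mul_apply, Matrix.conjTranspose_apply]
    rw [Finset.sum_comm]
    push_cast
    refine Finset.sum_congr rfl fun i _ => Finset.sum_congr rfl fun j _ => ?_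
    exact Complex.conj_mul' _
  set n : ℝ := (Fintype.card ι : ℝ) with hn
  let c : ℝ := s + 2 / 3
  have hexp : ((M - (c : ℂ) • Q).conjTranspose * (M - (c : ℂ) • Q)).trace
      = (M.conjTranspose * M).trace - 2 * c * M.trace + c ^ 2 * Q.trace := by
    have : (M - (c : ℂ) • Q).conjTranspose = M - (c : ℂ) • Q := by
      rw [Matrix.conjTranspose_sub, Matrix.conjTranspose_smul, hM, hQ]
      simp
    rw [this, hM]
    simp only [Matrix.sub_mul, Matrix.mul_sub, Matrix.smul_mul, Matrix.mul_smul, hMQ, hQM, hQQ,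
      Matrix.trace_sub, Matrix.trace_smul, smul_eq_mul]
    ring
  rw [hfro, hfro, htrM, htrQ] at hexp
  have hexp' : (∑ i, ∑ j, ‖(M - (c : ℂ) • Q) i j‖ ^ 2 : ℝ)
      = (∑ i, ∑ j, ‖M i j‖ ^ 2) - 2 * c * (n * s) + c ^ 2 * (n - 4) := by
    have h4 : ((Fintype.card ι : ℂ)) = ((n : ℝ) : ℂ) := by simp [hn]
    rw [h4] at hexp
    exact_mod_cast hexp
  have hnn : 0 ≤ (∑ i, ∑ j, ‖M i j‖ ^ 2) - 2 * c * (n * s) + c ^ 2 * (n - 4) := by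
    rw [← hexp']
    positivity
  have hoff : ∀ i j, ‖M i j‖ ^ 2 ≤ (if i = j then s ^ 2 - ∑ r, w r * (‖B r i‖ ^ 2 * ‖B r j‖ ^ 2) else 0)
      + ∑ r, w r * (‖B r i‖ ^ 2 * ‖B r j‖ ^ 2) := by
    intro i j
    by_cases hij : i = j
    · subst hij
      rw [if_pos rfl, hdiag]
      simp
    · rw [if_neg hij, zero_add]
      have h1 : ‖M i j‖ ≤ ∑ r, w r * (‖B r i‖ * ‖B r j‖) := by
        rw [hMa]
        refine (norm_sum_le _ _).trans (le_of_eq ?_)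
        refine Finset.sum_congr rfl fun r _ => ?_
        rw [norm_mul, norm_mul, norm_star, Complex.norm_real, Real.norm_of_nonneg (hw r).le]
      have h2 := Finset.sum_sq_le_sum_mul_sum_of_sq_le_mul Finset.univ
        (r := fun r => w r * (‖B r i‖ * ‖B r j‖))
        (f := fun r => if i ∈ supp r ∧ j ∈ supp r then w r else 0)
        (g := fun r => w r * (‖B r i‖ ^ 2 * ‖B r j‖ ^ 2))
        (fun r _ => by split_ifs; exacts [(hw r).le, le_rfl])
        (fun r _ => mul_nonneg (hw r).le (by positivity))
        (fun r _ => by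
          split_ifs with h
          · exact le_of_eq (by ring)
          · rw [not_and_or] at h
            rcases h with h | h <;> simp [hB0 r _ h])
      rw [hpair i j hij, one_mul] at h2
      exact (pow_le_pow_left₀ (norm_nonneg _) h1 2).trans h2
  have hsum : ∑ i, ∑ j, ‖M i j‖ ^ 2 ≤ n * s ^ 2 + (2/3) * (n * s) := by
    have hW : ∑ r, w r = n * s := by
      calc ∑ r, w r = ∑ r, ∑ i, w r * ‖B r i‖ ^ 2 := by
            refine Finset.sum_congr rfl fun r _ => ?_
            rw [← Finset.mul_sum, hrow, mul_one]
        _ = ∑ i, ∑ r, w r * ‖B r i‖ ^ 2 := Finset.sum_comm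
        _ = n * s := by simp [hcol, hn]
    have h1 : ∑ i, ∑ j, ‖M i j‖ ^ 2 ≤ ∑ i, ∑ j, ((if i = j then s ^ 2 - ∑ r, w r * (‖B r i‖ ^ 2 * ‖B r j‖ ^ 2) else 0)
      + ∑ r, w r * (‖B r i‖ ^ 2 * ‖B r j‖ ^ 2)) :=
      Finset.sum_le_sum fun i _ => Finset.sum_le_sum fun j _ => hoff i j
    refine h1.trans ?_
    simp only [Finset.sum_add_distrib, Finset.sum_ite_eq, mem_univ, if_true, Finset.sum_sub_distrib]
    have h2 : ∑ i, ∑ j, ∑ r, w r * (‖B r i‖ ^ 2 * ‖B r j‖ ^ 2) = ∑ r, w r := by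
      have : ∀ i, ∑ j, ∑ r, w r * (‖B r i‖ ^ 2 * ‖B r j‖ ^ 2) = ∑ r, w r * ‖B r i‖ ^ 2 := by
        intro i
        rw [Finset.sum_comm]
        refine Finset.sum_congr rfl fun r _ => ?_
        rw [← Finset.mul_sum, ← Finset.mul_sum, hrow, mul_one]
      simp only [this]
      rw [Finset.sum_comm]
      refine Finset.sum_congr rfl fun r _ => ?_
      rw [← Finset.mul_sum, hrow, mul_one]
    have h3 : (1/3) * ∑ r, w r ≤ ∑ i, ∑ r, w r * (‖B r i‖ ^ 2 * ‖B r i‖ ^ 2) := by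
      rw [Finset.sum_comm, Finset.mul_sum]
      refine Finset.sum_le_sum fun r _ => ?_
      rw [← Finset.mul_sum, mul_comm]
      refine mul_le_mul_of_nonneg_left ?_ (hw r).le
      have h4 := sq_sum_le_card_mul_sum_sq (s := supp r) (f := fun i => ‖B r i‖ ^ 2)
      have h5 : ∑ i ∈ supp r, ‖B r i‖ ^ 2 = 1 := by
        rw [← hrow r]
        exact Finset.sum_subset (Finset.subset_univ _) fun i _ hi => by simp [hB0 r i hi]
      have h6 : ∑ i ∈ supp r, (‖B r i‖ ^ 2) ^ 2 = ∑ i, ‖B r i‖ ^ 2 * ‖B r i‖ ^ 2 := by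
        simp only [← sq]
        exact Finset.sum_subset (Finset.subset_univ _) fun i _ hi => by simp [hB0 r i hi]
      rw [h5, h6, hcard] at h4
      push_cast at h4
      linarith
    rw [h2]
    simp only [Finset.sum_const, Finset.card_univ, nsmul_eq_mul]
    rw [hW] at *
    rw [← hn]
    linarith
  have hn4 : 4 ≤ n := by
    have h1 : (4:ℕ) ≤ Fintype.card ι := by
      have h2 : (1 : Matrix (Fin 4) (Fin 4) ℂ).rank ≤ U.rank := by
        rw [← hU]; exact Matrix.rank_mul_le_right _ _
      have h3 := Matrix.rank_le_card_height U
      rw [Matrix.rank_one] at h2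
      simpa using h2.trans h3
    rw [hn]; exact_mod_cast h1
  have hcpos : 0 < c := by simp only [c]; linarith
  have : 0 ≤ c * (c * (n - 4) - n * s) := by
    have : c * (c * (n - 4) - n * s) = (n * s ^ 2 + (2/3) * (n * s)) - 2 * c * (n * s) + c ^ 2 * (n - 4) := by
      simp only [c]; ring
    linarith
  have h7 : 0 ≤ c * (n - 4) - n * s := nonneg_of_mul_nonneg_right this hcpos
  simp only [c] at h7
  linarith

open Finset in
theorem kel_design {ι R : Type} [Fintype ι] [Fintype R] [DecidableEq ι]
    (A : R → ι → ℂ) (supp : R → Finset ι) (hcard : ∀ r, (supp r).card = 3)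
    (hA : ∀ r i, A r i ≠ 0 ↔ i ∈ supp r)
    (w : R → ℝ) (hw : ∀ r, 0 < w r)
    (hpair : ∀ i j, i ≠ j → ∑ r, (if i ∈ supp r ∧ j ∈ supp r then w r else 0) = 1)
    (K : Submodule ℂ (ι → ℂ)) (hK : ∀ u ∈ K, ∀ r, ∑ i, A r i * u i = 0) :
    Module.finrank ℂ K < 4 := by
  by_contra hlt
  rw [not_lt] at hlt
  have hA0 : ∀ r i, i ∉ supp r → A r i = 0 := fun r i h => by
    by_contra h'
    exact h ((hA r i).1 h')
  obtain ⟨t, ht⟩ := kel_scaling (fun r i => ‖A r i‖ ^ 2) supp hcard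
    (fun r i h => by have := (hA r i).2 h; positivity)
    (fun r i h => by simp [hA0 r i h]) w hw
    (fun i j hij => by
      by_contra hcon
      push Not at hcon
      have h1 := hpair i j hij
      rw [Finset.sum_eq_zero] at h1
      · exact zero_ne_one h1
      · intro r _
        rw [if_neg]
        rintro ⟨h2, h3⟩
        exact hcon r h2 h3)
  obtain ⟨Z, hZ⟩ : ∃ Z : R → ℝ, ∀ r, Z r = ∑ k, ‖A r k‖ ^ 2 * Real.exp (t k) := ⟨_, fun r => rfl⟩
  have hZpos : ∀ r, 0 < Z r := by
    intro r
    obtain ⟨a, ha⟩ : (supp r).Nonempty := by rw [← Finset.card_pos, hcard]; norm_num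
    rw [hZ]
    have := (hA r a).2 ha
    exact Finset.sum_pos' (fun k _ => by positivity) ⟨a, mem_univ _, by positivity⟩
  simp only [← hZ] at ht
  obtain ⟨B, hB⟩ : ∃ B : R → ι → ℂ, ∀ r i, B r i =
      A r i * (Real.exp (t i / 2) : ℂ) * ((Real.sqrt (Z r))⁻¹ : ℝ) := ⟨_, fun r i => rfl⟩
  have hBn : ∀ r i, ‖B r i‖ ^ 2 = ‖A r i‖ ^ 2 * Real.exp (t i) / Z r := by
    intro r i
    rw [hB, norm_mul, norm_mul, Complex.norm_real, Complex.norm_real, mul_pow, mul_pow,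
      Real.norm_eq_abs, Real.norm_eq_abs, sq_abs, sq_abs, inv_pow, Real.sq_sqrt (hZpos r).le,
      ← Real.exp_nat_mul]
    congr 3
    push_cast; ring
  let c : ι → ℂ := fun i => ((Real.exp (t i / 2))⁻¹ : ℝ)
  have hc : ∀ i, c i ≠ 0 := fun i => by
    simp only [c, ne_eq, Complex.ofReal_eq_zero, inv_eq_zero]
    exact (Real.exp_pos _).ne'
  let D : (ι → ℂ) ≃ₗ[ℂ] EuclideanSpace ℂ ι :=
    (LinearEquiv.piCongrRight (fun i => LinearEquiv.smulOfNeZero ℂ ℂ (c i) (hc i))).trans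
      (WithLp.linearEquiv 2 ℂ (ι → ℂ)).symm
  have hD : ∀ u i, (D u) i = c i * u i := fun u i => rfl
  let K' := K.map D.toLinearMap
  have hfr : 4 ≤ Module.finrank ℂ K' := by
    have : Module.finrank ℂ K' = Module.finrank ℂ K := LinearEquiv.finrank_map_eq D K
    omega
  let b := stdOrthonormalBasis ℂ K'
  let U : Matrix ι (Fin 4) ℂ := Matrix.of fun i k => ((b (Fin.castLE hfr k) : K') : EuclideanSpace ℂ ι) i
  have hUa : ∀ i k, U i k = ((b (Fin.castLE hfr k) : K') : EuclideanSpace ℂ ι) i := fun _ _ => rfl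
  refine kel_core B supp hcard (fun r i h => by rw [hB, hA0 r i h]; simp) w hw hpair ?_
    (((Fintype.card ι : ℝ) - 1) / 6) (by ring) ?_ U ?_ ?_
  · intro r
    simp only [hBn]
    rw [← Finset.sum_div, ← hZ, div_self (hZpos r).ne']
  · intro i
    simp only [hBn]
    rw [ht i]
    have h1 : ∑ j ∈ univ.erase i, ∑ r, (if i ∈ supp r ∧ j ∈ supp r then w r else 0)
        = (Fintype.card ι : ℝ) - 1 := by
      rw [Finset.sum_congr rfl (fun j hj => hpair i j (Finset.ne_of_mem_erase hj).symm)]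
      rw [Finset.sum_const, Finset.card_erase_of_mem (mem_univ i), Finset.card_univ]
      have : 1 ≤ Fintype.card ι := Fintype.card_pos_iff.2 ⟨i⟩
      simp [Nat.cast_sub this]
    rw [← h1, Finset.sum_comm, Finset.sum_div]
    refine Finset.sum_congr rfl fun r _ => ?_
    by_cases hi : i ∈ supp r
    · simp only [hi, true_and, if_true]
      rw [← Finset.sum_filter]
      have : (univ.erase i).filter (fun j => j ∈ supp r) = (supp r).erase i := by
        ext j; simp
      rw [this, Finset.sum_const, Finset.card_erase_of_mem hi, hcard]
      simp only [nsmul_eq_mul]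
      push_cast
      ring
    · simp [hi]
  · ext k l
    have h1 := orthonormal_iff_ite.1 b.orthonormal (Fin.castLE hfr k) (Fin.castLE hfr l)
    rw [Submodule.coe_inner, PiLp.inner_apply] at h1
    rw [Matrix.mul_apply, Matrix.one_apply]
    have h2 : (Fin.castLE hfr k = Fin.castLE hfr l) ↔ k = l := (Fin.castLE_injective hfr).eq_iff
    simp only [h2] at h1
    rw [← h1]
    refine Finset.sum_congr rfl fun i _ => ?_
    rw [Matrix.conjTranspose_apply, hUa, hUa]
    simp [mul_comm]
  · intro r k
    obtain ⟨u, hu, hue⟩ := (b (Fin.castLE hfr k)).2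
    have h1 : ∀ i, U i k = c i * u i := fun i => by
      rw [hUa, ← hue]; exact hD u i
    have h2 : ∀ i, B r i * U i k = ((Real.sqrt (Z r))⁻¹ : ℝ) * (A r i * u i) := by
      intro i
      rw [h1, hB]
      have h3 : (Real.exp (t i / 2) : ℂ) * c i = 1 := by
        simp only [c]
        rw [← Complex.ofReal_mul, mul_inv_cancel₀ (Real.exp_pos _).ne', Complex.ofReal_one]
      linear_combination (A r i * ((Real.sqrt (Z r))⁻¹ : ℝ) * u i) * h3
    simp only [h2, ← Finset.mul_sum, hK u hu r, mul_zero]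

open Finset in
theorem kel_kelly {ι V : Type} [Fintype ι] [AddCommGroup V] [Module ℂ V]
    (v : ι → V) (hind : ∀ i j, i ≠ j → ∀ a b : ℂ, a • v i + b • v j = 0 → a = 0 ∧ b = 0)
    (h3 : ∀ i j, i ≠ j → ∃ k, k ≠ i ∧ k ≠ j ∧ v k ∈ Submodule.span ℂ {v i, v j}) :
    Module.finrank ℂ (Submodule.span ℂ (Set.range v)) < 4 := by
  classical
  let R := {t : Finset ι // t.card = 3 ∧ ∃ a : ι → ℂ, (∀ i, a i ≠ 0 ↔ i ∈ t) ∧ ∑ i, a i • v i = 0}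
  have hRex : ∀ r : R, ∃ a : ι → ℂ, (∀ i, a i ≠ 0 ↔ i ∈ r.1) ∧ ∑ i, a i • v i = 0 := fun r => r.2.2
  choose A hA hAv using hRex
  let L : Finset ι → Finset ι := fun t => univ.filter fun l => v l ∈ Submodule.span ℂ (v '' (t : Set ι))
  let Lc : ι → ι → Finset ι := fun i j => univ.filter fun l => v l ∈ Submodule.span ℂ {v i, v j}
  have hLi : ∀ i j, i ∈ Lc i j := fun i j => by
    simp only [Lc, mem_filter, mem_univ, true_and]
    exact Submodule.subset_span (by simp)
  have hLj : ∀ i j, j ∈ Lc i j := fun i j => by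
    simp only [Lc, mem_filter, mem_univ, true_and]
    exact Submodule.subset_span (by simp)
  have hcardL : ∀ i j, i ≠ j → (((Lc i j).erase i).erase j).card + 2 = (Lc i j).card := by
    intro i j hij
    have h1 := Finset.card_erase_add_one (hLi i j)
    have h2 := Finset.card_erase_add_one (Finset.mem_erase.2 ⟨hij.symm, hLj i j⟩)
    omega
  have hL3 : ∀ i j, i ≠ j → 0 < (((Lc i j).erase i).erase j).card := by
    intro i j hij
    obtain ⟨k, hki, hkj, hk⟩ := h3 i j hij
    exact Finset.card_pos.2 ⟨k, by simp [hki, hkj, Lc, hk]⟩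
  -- triples
  have hthird : ∀ (r : R) i j, i ≠ j → i ∈ r.1 → j ∈ r.1 →
      ∃ k, k ≠ i ∧ k ≠ j ∧ r.1 = {i, j, k} ∧ v k ∈ Submodule.span ℂ {v i, v j} := by
    intro r i j hij hi hj
    have hc : ((r.1.erase i).erase j).card = 1 := by
      rw [Finset.card_erase_of_mem (Finset.mem_erase.2 ⟨hij.symm, hj⟩), Finset.card_erase_of_mem hi, r.2.1]
    obtain ⟨k, hk⟩ := Finset.card_eq_one.1 hc
    have hkm : k ∈ (r.1.erase i).erase j := by rw [hk]; simp
    have hkj : k ≠ j := Finset.ne_of_mem_erase hkm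
    have hki : k ≠ i := Finset.ne_of_mem_erase (Finset.mem_of_mem_erase hkm)
    have hkr : k ∈ r.1 := Finset.mem_of_mem_erase (Finset.mem_of_mem_erase hkm)
    have hr : r.1 = {i, j, k} := by
      rw [← Finset.insert_erase hi, ← Finset.insert_erase (Finset.mem_erase.2 ⟨hij.symm, hj⟩), hk]
    refine ⟨k, hki, hkj, hr, ?_⟩
    have hs : ∑ l ∈ r.1, A r l • v l = 0 := by
      refine Eq.trans ?_ (hAv r)
      refine Finset.sum_subset (Finset.subset_univ _) fun l _ hl => ?_
      have : A r l = 0 := by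
        by_contra h'
        exact hl ((hA r l).1 h')
      rw [this, zero_smul]
    rw [hr, Finset.sum_insert (by simp [hij, hki.symm]), Finset.sum_insert (by simp [hkj.symm]),
      Finset.sum_singleton] at hs
    have hne : A r k ≠ 0 := (hA r k).2 hkr
    rw [Submodule.mem_span_pair]
    refine ⟨-(A r k)⁻¹ * A r i, -(A r k)⁻¹ * A r j, ?_⟩
    have h5 : A r k • v k = -(A r i • v i + A r j • v j) := by
      rw [eq_neg_iff_add_eq_zero, ← hs]; abel
    have h6 : v k = (A r k)⁻¹ • (A r k • v k) := by rw [smul_smul, inv_mul_cancel₀ hne, one_smul]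
    rw [h6, h5]
    module
  have hLL : ∀ (r : R) i j, i ≠ j → i ∈ r.1 → j ∈ r.1 → L r.1 = Lc i j := by
    intro r i j hij hi hj
    obtain ⟨k, hki, hkj, hr, hk⟩ := hthird r i j hij hi hj
    have : Submodule.span ℂ (v '' (r.1 : Set ι)) = Submodule.span ℂ {v i, v j} := by
      rw [hr]
      apply le_antisymm
      · rw [Submodule.span_le]
        rintro _ ⟨l, hl, rfl⟩
        simp only [coe_insert, coe_singleton, Set.mem_insert_iff, Set.mem_singleton_iff] at hl
        rcases hl with rfl | rfl | rfl
        · exact Submodule.subset_span (by simp)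
        · exact Submodule.subset_span (by simp)
        · exact hk
      · apply Submodule.span_mono
        rintro x hx
        rcases hx with rfl | rfl
        · exact ⟨i, by simp, rfl⟩
        · exact ⟨j, by simp, rfl⟩
    simp only [L, Lc, this]
  let w : R → ℝ := fun r => 1 / (((L r.1).card : ℝ) - 2)
  have hwij : ∀ (r : R) i j, i ≠ j → i ∈ r.1 → j ∈ r.1 →
      w r = 1 / ((((Lc i j).erase i).erase j).card : ℝ) := by
    intro r i j hij hi hj
    simp only [w]
    rw [hLL r i j hij hi hj, ← hcardL i j hij]
    push_cast
    congr 1; ring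
  have hw : ∀ r, 0 < w r := by
    intro r
    obtain ⟨i, hi, j, hj, hij⟩ := Finset.one_lt_card.1 (show 1 < r.1.card by rw [r.2.1]; norm_num)
    rw [hwij r i j hij hi hj]
    have := hL3 i j hij
    positivity
  let Lm := Fintype.linearCombination ℂ v
  let e := Module.piEquiv ι ℂ ℂ
  let K : Submodule ℂ (ι → ℂ) := (LinearMap.range Lm.dualMap).map e.symm.toLinearMap
  have hKr : Module.finrank ℂ K = Module.finrank ℂ (Submodule.span ℂ (Set.range v)) := by
    have h1 : Module.finrank ℂ K = Module.finrank ℂ (LinearMap.range Lm.dualMap) :=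
      LinearEquiv.finrank_map_eq e.symm _
    rw [h1, LinearMap.finrank_range_dualMap_eq_finrank_range, Fintype.range_linearCombination]
  rw [← hKr]
  refine kel_design A (fun r => r.1) (fun r => r.2.1) hA w hw ?_ K ?_
  · intro i j hij
    rw [← Finset.sum_filter]
    rw [Finset.sum_congr rfl (g := fun _ => 1 / ((((Lc i j).erase i).erase j).card : ℝ))
      (fun r hr => by
        have hr' := (Finset.mem_filter.1 hr).2
        exact hwij r i j hij hr'.1 hr'.2)]
    rw [Finset.sum_const]
    have hmk : ∀ k ∈ ((Lc i j).erase i).erase j, ({i, j, k} : Finset ι).card = 3 ∧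
        ∃ a : ι → ℂ, (∀ l, a l ≠ 0 ↔ l ∈ ({i, j, k} : Finset ι)) ∧ ∑ l, a l • v l = 0 := by
      intro k hk
      simp only [mem_erase, Lc, mem_filter, mem_univ, true_and] at hk
      obtain ⟨hkj, hki, hk⟩ := hk
      refine ⟨Finset.card_eq_three.2 ⟨i, j, k, hij, hki.symm, hkj.symm, rfl⟩, ?_⟩
      obtain ⟨x, y, hxy⟩ := Submodule.mem_span_pair.1 hk
      have hx : x ≠ 0 := by
        rintro rfl
        have := hind j k hkj.symm y (-1) (by rw [← hxy]; module)
        simpa using this.2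
      have hy : y ≠ 0 := by
        rintro rfl
        have := hind i k hki.symm x (-1) (by rw [← hxy]; module)
        simpa using this.2
      refine ⟨fun l => if l = i then x else if l = j then y else if l = k then -1 else 0, ?_, ?_⟩
      · intro l
        simp only [mem_insert, mem_singleton]
        split_ifs <;> simp_all
      · rw [← Finset.sum_subset (Finset.subset_univ ({i, j, k} : Finset ι))]
        · rw [Finset.sum_insert (by simp [hij, hki.symm]), Finset.sum_insert (by simp [hkj.symm]),
            Finset.sum_singleton]
          simp only [if_true, hij.symm, hki, hkj, if_false]
          rw [← hxy]; module
        · intro l _ hl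
          simp only [mem_insert, mem_singleton, not_or] at hl
          simp [hl.1, hl.2.1, hl.2.2]
    have hcc : (((Lc i j).erase i).erase j).card =
        (univ.filter fun r : R => i ∈ r.1 ∧ j ∈ r.1).card := by
      refine Finset.card_bij (fun k hk => ⟨{i, j, k}, hmk k hk⟩) ?_ ?_ ?_
      · intro k hk
        simp
      · intro k hk k' hk' hkk
        have h1 : ({i, j, k} : Finset ι) = {i, j, k'} := congrArg Subtype.val hkk
        have h2 : k ∈ ({i, j, k'} : Finset ι) := by rw [← h1]; simp
        simp only [mem_erase] at hk
        simp only [mem_insert, mem_singleton] at h2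
        tauto
      · intro r hr
        have hr' := (Finset.mem_filter.1 hr).2
        obtain ⟨k, hki, hkj, hrk, hk⟩ := hthird r i j hij hr'.1 hr'.2
        exact ⟨k, by simp [hki, hkj, Lc, hk], Subtype.ext hrk.symm⟩
    rw [← hcc, nsmul_eq_mul]
    have := hL3 i j hij
    have h9 : ((((Lc i j).erase i).erase j).card : ℝ) ≠ 0 := by positivity
    field_simp
  · rintro _ ⟨_, ⟨f, rfl⟩, rfl⟩ r
    have h1 : ∀ i, e.symm (Lm.dualMap f) i = f (v i) := by
      intro i
      have : e.symm (Lm.dualMap f) i = f (Lm (Pi.single i 1)) := by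
        rfl
      rw [this]
      simp [Lm, Fintype.linearCombination_apply_single]
    have h2 := congrArg f (hAv r)
    simp only [map_sum, map_smul, smul_eq_mul, map_zero] at h2
    rw [← h2]
    exact Finset.sum_congr rfl fun i _ => by
      rw [← h1 i]; rfl

theorem kel_rep_ext {V : Type} [AddCommGroup V] [Module ℂ V] {z u : Projectivization ℂ V} {b : ℂ}
    (h : z.rep = b • u.rep) : z = u := by
  rw [← z.mk_rep, ← u.mk_rep, Projectivization.mk_eq_mk_iff']
  exact ⟨b, h.symm⟩

theorem kel_indep {V : Type} [AddCommGroup V] [Module ℂ V] {x y : V} (hx : x ≠ 0)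
    (h : ∀ c : ℂ, y ≠ c • x) (a b : ℂ) (hab : a • x + b • y = 0) : a = 0 ∧ b = 0 := by
  have hb : b = 0 := by
    by_contra hb
    apply h (-(b⁻¹ * a))
    have h1 : y = b⁻¹ • (b • y) := by rw [smul_smul, inv_mul_cancel₀ hb, one_smul]
    have h2 : b • y = -(a • x) := by rw [eq_neg_iff_add_eq_zero, ← hab]; abel
    rw [h1, h2]; module
  subst hb
  refine ⟨?_, rfl⟩
  simp only [zero_smul, add_zero, smul_eq_zero] at hab
  exact hab.resolve_right hx

/-- A finite family of points whose span modulo `W` has dimension at least four has an ordinary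
line modulo `W`. -/
theorem kel_quot {V : Type} [AddCommGroup V] [Module ℂ V]
    (T : Set (Projectivization ℂ V)) (hT : T.Finite) (Q : Type) [AddCommGroup Q] [Module ℂ Q]
    (π : V →ₗ[ℂ] Q) [FiniteDimensional ℂ Q]
    (hdim : 4 ≤ Module.finrank ℂ (Submodule.map π (⨆ p ∈ T, Projectivization.submodule p))) :
    ∃ x ∈ T, ∃ y ∈ T, (∀ a b : ℂ, a • π x.rep + b • π y.rep = 0 → a = 0 ∧ b = 0) ∧
      ∀ z ∈ T, (∃ a b : ℂ, π z.rep = a • π x.rep + b • π y.rep) →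
        (∃ c : ℂ, π z.rep = c • π x.rep) ∨ (∃ c : ℂ, π z.rep = c • π y.rep) := by
  classical
  let T' := {x : Projectivization ℂ V // x ∈ T ∧ π x.rep ≠ 0}
  have : Finite T' := (hT.subset (fun x (hx : x ∈ T ∧ π x.rep ≠ 0) => hx.1)).to_subtype
  let f : T' → Projectivization ℂ Q := fun x => Projectivization.mk ℂ (π x.1.rep) x.2.2
  let ι := Set.range f
  have : Fintype ι := Fintype.ofFinite _
  have hg : ∀ i : ι, ∃ x, f x = i := fun i => i.2
  choose g hg using hg
  let v : ι → Q := fun i => π (g i).1.rep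
  have hv0 : ∀ i, v i ≠ 0 := fun i => (g i).2.2
  have hmk : ∀ i, Projectivization.mk ℂ (v i) (hv0 i) = i := fun i => hg i
  have hind : ∀ i j, i ≠ j → ∀ a b : ℂ, a • v i + b • v j = 0 → a = 0 ∧ b = 0 := by
    intro i j hij
    apply kel_indep (hv0 i)
    intro c hc
    apply hij
    apply Subtype.ext
    rw [← hmk i, ← hmk j, eq_comm, Projectivization.mk_eq_mk_iff']
    exact ⟨c, hc.symm⟩
  have hfr : 4 ≤ Module.finrank ℂ (Submodule.span ℂ (Set.range v)) := by
    refine hdim.trans (Submodule.finrank_mono ?_)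
    rw [Submodule.map_iSup]
    refine iSup_le fun p => ?_
    rw [Submodule.map_iSup]
    refine iSup_le fun hp => ?_
    rw [Projectivization.submodule_eq, Submodule.map_span, Set.image_singleton,
      Submodule.span_singleton_le_iff_mem]
    by_cases h0 : π p.rep = 0
    · rw [h0]; exact Submodule.zero_mem _
    · let i : ι := ⟨f ⟨p, hp, h0⟩, _, rfl⟩
      have h1 : Projectivization.mk ℂ (π p.rep) h0 = Projectivization.mk ℂ (v i) (hv0 i) := by
        rw [hmk i]
      obtain ⟨a, ha⟩ := (Projectivization.mk_eq_mk_iff' ℂ _ _ _ _).1 h1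
      rw [← ha]
      exact Submodule.smul_mem _ _ (Submodule.subset_span ⟨i, rfl⟩)
  by_contra hcon
  refine absurd (kel_kelly v hind ?_) (not_lt.2 hfr)
  intro i j hij
  by_contra hk
  push Not at hk
  apply hcon
  refine ⟨(g i).1, (g i).2.1, (g j).1, (g j).2.1, hind i j hij, ?_⟩
  rintro z hz ⟨a, b, hab⟩
  by_cases h0 : π z.rep = 0
  · left; exact ⟨0, by rw [h0, zero_smul]⟩
  let k : ι := ⟨f ⟨z, hz, h0⟩, _, rfl⟩
  have h1 : Projectivization.mk ℂ (v k) (hv0 k) = Projectivization.mk ℂ (π z.rep) h0 := by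
    rw [hmk k]
  obtain ⟨c, hc⟩ := (Projectivization.mk_eq_mk_iff' ℂ _ _ _ _).1 h1
  have hkm : v k ∈ Submodule.span ℂ {v i, v j} := by
    rw [← hc, hab, Submodule.mem_span_pair]
    exact ⟨c * a, c * b, by simp only [v]; module⟩
  obtain ⟨c', hc'⟩ := (Projectivization.mk_eq_mk_iff' ℂ _ _ _ _).1 h1.symm
  by_cases hki : k = i
  · left; exact ⟨c', by rw [← hc', hki]⟩
  · right
    have hkj : k = j := by
      by_contra hkj
      exact hk k hki hkj hkm
    exact ⟨c', by rw [← hc', hkj]⟩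

theorem projective_sets_span_six_exists_line_meeting_exactly_two
    (n m : ℕ) (hm : 2 ≤ m)
    (S : Fin m → Set (Projectivization ℂ (Fin (n + 1) → ℂ)))
    (hdisj : ∀ i j, i ≠ j → Disjoint (S i) (S j))
    (hne : ∀ i, (S i).Nonempty) (hfin : ∀ i, (S i).Finite)
    (hdim : 6 ≤ Module.finrank ℂ
      ↥(⨆ p ∈ ⋃ i, S i, Projectivization.submodule p)) :
    ∃ W : Submodule ℂ (Fin (n + 1) → ℂ), Module.finrank ℂ W = 2 ∧
      {i : Fin m | ∃ p ∈ S i, Projectivization.submodule p ≤ W}.encard = 2 := by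
  by_contra hcon
  have hneq : ∀ {i j x y}, i ≠ j → x ∈ S i → y ∈ S j → x ≠ y := by
    rintro i j x y hij hx hy rfl
    exact Set.disjoint_left.1 (hdisj i j hij) hx hy
  have hlin : ∀ {x y : Projectivization ℂ (Fin (n + 1) → ℂ)}, x ≠ y →
      Module.finrank ℂ (Submodule.span ℂ {x.rep, y.rep}) = 2 := by
    intro x y hxy
    have h1 : LinearIndependent ℂ ![x.rep, y.rep] := by
      rw [LinearIndependent.pair_iff]
      intro a b hab
      exact kel_indep x.rep_nonzero (fun c hc => hxy (kel_rep_ext hc).symm) a b hab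
    have h2 := finrank_span_eq_card h1
    have h3 : Set.range ![x.rep, y.rep] = {x.rep, y.rep} := by
      ext u
      simp only [Set.mem_range, Fin.exists_fin_two, Set.mem_insert_iff, Set.mem_singleton_iff]
      simp [eq_comm]
    rw [h3, Fintype.card_fin] at h2
    exact h2
  have key : ∀ {i j x y}, i ≠ j → x ∈ S i → y ∈ S j → ∃ k, k ≠ i ∧ k ≠ j ∧ ∃ z ∈ S k, ∃ a b : ℂ,
      a ≠ 0 ∧ b ≠ 0 ∧ z.rep = a • x.rep + b • y.rep := by
    intro i j x y hij hx hy
    by_contra hk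
    apply hcon
    refine ⟨Submodule.span ℂ {x.rep, y.rep}, hlin (hneq hij hx hy), ?_⟩
    rw [← Set.encard_pair hij]
    congr 1
    ext k
    simp only [Set.mem_ofPred_eq, Set.mem_insert_iff, Set.mem_singleton_iff,
      Projectivization.submodule_eq, Submodule.span_singleton_le_iff_mem]
    constructor
    · rintro ⟨z, hz, hzm⟩
      by_contra hne'
      rw [not_or] at hne'
      obtain ⟨a, b, hab⟩ := Submodule.mem_span_pair.1 hzm
      refine hk ⟨k, hne'.1, hne'.2, z, hz, a, b, ?_, ?_, hab.symm⟩
      · rintro rfl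
        exact hneq hne'.2 hz hy (kel_rep_ext (b := b) (by rw [← hab]; simp))
      · rintro rfl
        exact hneq hne'.1 hz hx (kel_rep_ext (b := a) (by rw [← hab]; simp))
    · rintro (rfl | rfl)
      · exact ⟨x, hx, Submodule.subset_span (by simp)⟩
      · exact ⟨y, hy, Submodule.subset_span (by simp)⟩
  let i1 : Fin m := ⟨0, by omega⟩
  let i2 : Fin m := ⟨1, by omega⟩
  have hi12 : i1 ≠ i2 := by simp [i1, i2]
  obtain ⟨p, hp⟩ := hne i1
  obtain ⟨q, hq⟩ := hne i2
  let W := Submodule.span ℂ {p.rep, q.rep}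
  have hW2 : Module.finrank ℂ W = 2 := hlin (hneq hi12 hp hq)
  have hTfin : (⋃ i, S i).Finite := Set.finite_iUnion hfin
  have h4 : 4 ≤ Module.finrank ℂ
      (Submodule.map W.mkQ (⨆ p ∈ ⋃ i, S i, Projectivization.submodule p)) := by
    generalize (⨆ p ∈ ⋃ i, S i, Projectivization.submodule p) = N at hdim
    have h1 := LinearMap.finrank_range_add_finrank_ker (W.mkQ.domRestrict N)
    rw [LinearMap.range_domRestrict] at h1
    have h2 : Module.finrank ℂ (LinearMap.ker (W.mkQ.domRestrict N)) ≤ 2 := by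
      rw [← hW2, ← Submodule.finrank_map_subtype_eq]
      apply Submodule.finrank_mono
      rintro _ ⟨x, hx, rfl⟩
      have hx' : W.mkQ x.1 = 0 := hx
      simpa using hx'
    omega
  obtain ⟨x, hx, y, hy, hind, hord⟩ := kel_quot _ hTfin _ W.mkQ h4
  have hpW : W.mkQ p.rep = 0 := by
    simp only [Submodule.mkQ_apply, Submodule.Quotient.mk_eq_zero]
    exact Submodule.subset_span (by simp)
  have hqW : W.mkQ q.rep = 0 := by
    simp only [Submodule.mkQ_apply, Submodule.Quotient.mk_eq_zero]
    exact Submodule.subset_span (by simp)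
  generalize W.mkQ = π at *
  have claim : ∀ {i j x' y'} {c d : ℂ}, x' ∈ S i → y' ∈ S j → c ≠ 0 → d ≠ 0 →
      π x'.rep = c • π x.rep → π y'.rep = d • π y.rep → i = j := by
    intro i j x' y' c d hx' hy' hc hd hxc hyd
    by_contra hij
    obtain ⟨k, _, _, z, hz, a, b, ha, hb, hzab⟩ := key hij hx' hy'
    have hpz : π z.rep = (a * c) • π x.rep + (b * d) • π y.rep := by
      rw [hzab, map_add, map_smul, map_smul, hxc, hyd]; module
    rcases hord z (Set.mem_iUnion.2 ⟨k, hz⟩) ⟨_, _, hpz⟩ with ⟨e, he⟩ | ⟨e, he⟩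
    · have := hind (a * c - e) (b * d) (by
        rw [sub_smul, ← he, hpz]; abel)
      exact (mul_ne_zero hb hd) this.2
    · have := hind (a * c) (b * d - e) (by
        rw [sub_smul, ← he, hpz]; abel)
      exact (mul_ne_zero ha hc) this.1
  obtain ⟨i, hxi⟩ := Set.mem_iUnion.1 hx
  obtain ⟨j, hyj⟩ := Set.mem_iUnion.1 hy
  have hij : i = j := claim hxi hyj one_ne_zero one_ne_zero (one_smul _ _).symm (one_smul _ _).symm
  have fin : ∀ {l u}, u ∈ S l → π u.rep = 0 → i ≠ l → False := by
    intro l u hu hu0 hil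
    obtain ⟨k, hki, _, z, hz, a, b, ha, hb, hzab⟩ := key hil hxi hu
    have hpz : π z.rep = a • π x.rep := by
      rw [hzab, map_add, map_smul, map_smul, hu0]; simp
    have := claim hz hyj ha one_ne_zero hpz (one_smul _ _).symm
    exact hki (this.trans hij.symm)
  by_cases h : i = i1
  · exact fin hq hqW (by rw [h]; exact hi12)
  · exact fin hp hpW h
end

section
/- (Kelly's theorem.) Let P be a finite set of more than 2 points in the affine space ℂ^n. If P is not contained in any 2-dimensional affine subspace (plane) of ℂ^n, then there exists a line in ℂ^n containing exactly two points of P. -/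
open Finset in
theorem kelly_counts {ι R : Type*} [Fintype ι] [Fintype R] [DecidableEq ι]
    (S : R → Finset ι) (hS : ∀ r, (S r).card = 3) (w : R → ℝ)
    (hpair : ∀ l l', l ≠ l' → ∑ r, (if l ∈ S r ∧ l' ∈ S r then w r else 0) = 1) :
    (∀ l, ∑ r, (if l ∈ S r then w r else 0) = ((Fintype.card ι : ℝ) - 1) / 2) ∧
    ∑ r, w r = Fintype.card ι * (((Fintype.card ι : ℝ) - 1) / 6) := by
  have h1 : ∀ l, ∑ r, (if l ∈ S r then w r else 0) = ((Fintype.card ι : ℝ) - 1) / 2 := by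
    intro l
    have e1 : ∑ l' ∈ univ.erase l, ∑ r, (if l ∈ S r ∧ l' ∈ S r then w r else 0)
        = (Fintype.card ι : ℝ) - 1 := by
      rw [Finset.sum_congr rfl (fun l' hl' => hpair l l' (Finset.ne_of_mem_erase hl').symm)]
      have : 1 ≤ Fintype.card ι := Fintype.card_pos_iff.2 ⟨l⟩
      simp [Finset.card_erase_of_mem, Nat.cast_sub this]
    rw [Finset.sum_comm] at e1
    have e2 : ∀ r, ∑ l' ∈ univ.erase l, (if l ∈ S r ∧ l' ∈ S r then w r else 0)
        = 2 * (if l ∈ S r then w r else 0) := by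
      intro r
      by_cases hl : l ∈ S r
      · simp only [hl, true_and, if_true]
        rw [← Finset.sum_filter, Finset.sum_const]
        have : (univ.erase l).filter (fun a => a ∈ S r) = (S r).erase l := by
          ext a; simp
        rw [this, Finset.card_erase_of_mem hl, hS]; simp
      · simp [hl]
    simp_rw [e2, ← Finset.mul_sum] at e1
    linarith
  refine ⟨h1, ?_⟩
  have e3 : ∑ l, ∑ r, (if l ∈ S r then w r else 0) = ∑ l : ι, ((Fintype.card ι : ℝ) - 1) / 2 :=
    Finset.sum_congr rfl fun l _ => h1 l
  rw [Finset.sum_comm] at e3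
  have e4 : ∀ r, ∑ l, (if l ∈ S r then w r else 0) = 3 * w r := by
    intro r
    rw [← Finset.sum_filter, Finset.sum_const]
    simp [hS]
  simp_rw [e4, ← Finset.mul_sum] at e3
  simp at e3
  linarith

open Finset in
theorem kelly_core {ι R : Type*} [Fintype ι] [Fintype R] [DecidableEq ι]
    (S : R → Finset ι) (hS : ∀ r, (S r).card = 3) (w : R → ℝ) (hw : ∀ r, 0 < w r)
    (hpair : ∀ l l', l ≠ l' → ∑ r, (if l ∈ S r ∧ l' ∈ S r then w r else 0) = 1)
    (hN : 2 ≤ Fintype.card ι)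
    (c : R → ι → ℂ) (hc0 : ∀ r l, l ∉ S r → c r l = 0)
    (hrow : ∀ r, ∑ l, ‖c r l‖ ^ 2 = 1)
    (hcol : ∀ l, ∑ r, w r * ‖c r l‖ ^ 2 = ((Fintype.card ι : ℝ) - 1) / 6)
    (d : ℕ) (U : Matrix ι (Fin d) ℂ) (hU : U.conjTranspose * U = 1)
    (hker : ∀ r k, ∑ l, c r l * U l k = 0) : d ≤ 3 := by
  obtain ⟨-, hW⟩ := kelly_counts S hS w hpair
  set N : ℝ := (Fintype.card ι : ℝ) with hNdef
  have hN' : (2 : ℝ) ≤ N := by rw [hNdef]; exact_mod_cast hN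
  let M : Matrix ι ι ℂ := fun l l' => ∑ r, (w r : ℂ) * (starRingEnd ℂ (c r l) * c r l')
  let Q : Matrix ι ι ℂ := 1 - U * U.conjTranspose
  have hMU : M * U = 0 := by
    ext l k
    rw [Matrix.mul_apply]
    simp only [M, Finset.sum_mul, Matrix.zero_apply]
    rw [Finset.sum_comm]
    apply Finset.sum_eq_zero
    intro r _
    have := hker r k
    calc _ = (w r : ℂ) * starRingEnd ℂ (c r l) * ∑ l', c r l' * U l' k := by
          rw [Finset.mul_sum]; exact Finset.sum_congr rfl fun _ _ => by ring
      _ = 0 := by rw [this, mul_zero]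
  have hMQ : M * Q = M := by
    simp only [Q, mul_sub, mul_one, ← Matrix.mul_assoc, hMU, Matrix.zero_mul, sub_zero]
  have hdiag : ∀ l, M l l = ((((N - 1) / 6 : ℝ)) : ℂ) := by
    intro l
    rw [← hcol l]
    simp only [M]
    push_cast
    refine Finset.sum_congr rfl fun r _ => ?_
    rw [Complex.conj_mul']
  have htr : (M * Q).trace = ((N * ((N - 1) / 6) : ℝ) : ℂ) := by
    rw [hMQ]
    simp only [Matrix.trace, Matrix.diag, hdiag]
    simp [hNdef]
  have hQQ : (Q.conjTranspose * Q).trace = ((N - d : ℝ) : ℂ) := by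
    have h1 : Q.conjTranspose = Q := by simp [Q, Matrix.conjTranspose_mul]
    have h2 : Q * Q = Q := by
      have : U * U.conjTranspose * (U * U.conjTranspose) = U * U.conjTranspose := by
        rw [Matrix.mul_assoc, ← Matrix.mul_assoc U.conjTranspose, hU, Matrix.one_mul]
      simp only [Q, mul_sub, sub_mul, mul_one, one_mul, this]; abel
    rw [h1, h2]
    simp only [Q, Matrix.trace_sub, Matrix.trace_one]
    rw [Matrix.trace_mul_comm, hU, Matrix.trace_one]
    simp [hNdef]
  have hQ2 : ∑ l, ∑ l', ‖Q l' l‖ ^ 2 = N - d := by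
    have : ((∑ l, ∑ l', ‖Q l' l‖ ^ 2 : ℝ) : ℂ) = ((N - d : ℝ) : ℂ) := by
      rw [← hQQ]
      simp only [Matrix.trace, Matrix.diag, Matrix.mul_apply, Matrix.conjTranspose_apply]
      push_cast
      refine Finset.sum_congr rfl fun l _ => Finset.sum_congr rfl fun l' _ => ?_
      rw [← Complex.conj_mul']; rfl
    exact_mod_cast this
  -- off diagonal bound
  have hoff : ∀ l l', l ≠ l' → ‖M l l'‖ ^ 2 ≤ ∑ r, w r * (‖c r l‖ ^ 2 * ‖c r l'‖ ^ 2) := by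
    intro l l' hll
    have h1 : ‖M l l'‖ ≤ ∑ r, (if l ∈ S r ∧ l' ∈ S r then Real.sqrt (w r) else 0) *
        (Real.sqrt (w r) * (‖c r l‖ * ‖c r l'‖)) := by
      refine (norm_sum_le _ _).trans (Finset.sum_le_sum fun r _ => ?_)
      by_cases h : l ∈ S r ∧ l' ∈ S r
      · rw [if_pos h, ← mul_assoc (Real.sqrt (w r)), Real.mul_self_sqrt (hw r).le]
        simp [abs_of_pos (hw r)]
      · rw [if_neg h]
        rcases not_and_or.1 h with h | h <;> simp [hc0 r _ h]
    have h2 := Finset.sum_mul_sq_le_sq_mul_sq univ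
      (fun r => if l ∈ S r ∧ l' ∈ S r then Real.sqrt (w r) else 0)
      (fun r => Real.sqrt (w r) * (‖c r l‖ * ‖c r l'‖))
    have h3 : ∑ r, (if l ∈ S r ∧ l' ∈ S r then Real.sqrt (w r) else 0) ^ 2 = 1 := by
      rw [← hpair l l' hll]
      refine Finset.sum_congr rfl fun r _ => ?_
      split_ifs
      · exact Real.sq_sqrt (hw r).le
      · simp
    rw [h3, one_mul] at h2
    refine (pow_le_pow_left₀ (norm_nonneg _) h1 2).trans (h2.trans (le_of_eq ?_))
    refine Finset.sum_congr rfl fun r _ => ?_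
    rw [mul_pow, Real.sq_sqrt (hw r).le, mul_pow]
  have hquart : ∀ r, 1 / 3 ≤ ∑ l, ‖c r l‖ ^ 2 * ‖c r l‖ ^ 2 := by
    intro r
    have h1 := Finset.sum_mul_sq_le_sq_mul_sq univ
      (fun l => if l ∈ S r then (1 : ℝ) else 0) (fun l => ‖c r l‖ ^ 2)
    have h2 : ∑ l, (if l ∈ S r then (1 : ℝ) else 0) * ‖c r l‖ ^ 2 = 1 := by
      refine Eq.trans (Finset.sum_congr rfl fun l _ => ?_) (hrow r)
      split_ifs with h
      · simp
      · simp [hc0 r l h]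
    have h3 : ∑ l, (if l ∈ S r then (1 : ℝ) else 0) ^ 2 = 3 := by
      simp only [ite_pow, one_pow]
      simp [hS]
    rw [h2, h3] at h1
    have h4 : ∑ l, ‖c r l‖ ^ 2 * ‖c r l‖ ^ 2 = ∑ l, (‖c r l‖ ^ 2) ^ 2 :=
      Finset.sum_congr rfl fun l _ => by ring
    rw [h4]
    linarith
  have hM2 : ∑ l, ∑ l', ‖M l l'‖ ^ 2 ≤ N * ((N - 1) / 6) ^ 2 + 2 / 3 * (N * ((N - 1) / 6)) := by
    have h1 : ∀ l, ∑ l', ‖M l l'‖ ^ 2 ≤ ((N - 1) / 6) ^ 2 +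
        ((∑ l', ∑ r, w r * (‖c r l‖ ^ 2 * ‖c r l'‖ ^ 2)) -
          ∑ r, w r * (‖c r l‖ ^ 2 * ‖c r l‖ ^ 2)) := by
      intro l
      rw [← Finset.add_sum_erase _ _ (Finset.mem_univ l),
        ← Finset.add_sum_erase univ (fun l' => ∑ r, w r * (‖c r l‖ ^ 2 * ‖c r l'‖ ^ 2))
          (Finset.mem_univ l)]
      have : ∑ l' ∈ univ.erase l, ‖M l l'‖ ^ 2 ≤
          ∑ l' ∈ univ.erase l, ∑ r, w r * (‖c r l‖ ^ 2 * ‖c r l'‖ ^ 2) :=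
        Finset.sum_le_sum fun l' hl' => hoff l l' (Finset.ne_of_mem_erase hl').symm
      have h4 : ‖M l l‖ ^ 2 = ((N - 1) / 6) ^ 2 := by
        rw [hdiag, Complex.norm_real, Real.norm_eq_abs, sq_abs]
      rw [h4]
      linarith
    refine (Finset.sum_le_sum fun l _ => h1 l).trans ?_
    rw [Finset.sum_add_distrib, Finset.sum_sub_distrib]
    have h2 : ∑ l, ∑ l', ∑ r, w r * (‖c r l‖ ^ 2 * ‖c r l'‖ ^ 2) = ∑ r, w r := by
      calc _ = ∑ r, ∑ l, ∑ l', w r * (‖c r l‖ ^ 2 * ‖c r l'‖ ^ 2) := by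
            rw [Finset.sum_congr rfl fun l _ => Finset.sum_comm]
            rw [Finset.sum_comm]
        _ = _ := by
            refine Finset.sum_congr rfl fun r _ => ?_
            simp_rw [← Finset.mul_sum, hrow, mul_one, hrow, mul_one]
    have h3 : (1 / 3) * ∑ r, w r ≤ ∑ l, ∑ r, w r * (‖c r l‖ ^ 2 * ‖c r l‖ ^ 2) := by
      rw [Finset.sum_comm, Finset.mul_sum]
      refine Finset.sum_le_sum fun r _ => ?_
      rw [← Finset.mul_sum, mul_comm]
      exact mul_le_mul_of_nonneg_left (hquart r) (hw r).le
    rw [h2]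
    rw [hW] at h3 ⊢
    simp only [Finset.sum_const, Finset.card_univ, nsmul_eq_mul]
    linarith
  -- Cauchy-Schwarz
  have hCS : (N * ((N - 1) / 6)) ^ 2 ≤
      (N * ((N - 1) / 6) ^ 2 + 2 / 3 * (N * ((N - 1) / 6))) * (N - d) := by
    have h1 : N * ((N - 1) / 6) ≤ ∑ p : ι × ι, ‖M p.1 p.2‖ * ‖Q p.2 p.1‖ := by
      have h0 : 0 ≤ N * ((N - 1) / 6) := by
        apply mul_nonneg <;> linarith
      calc N * ((N - 1) / 6) = ‖(M * Q).trace‖ := by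
            rw [htr, Complex.norm_real, Real.norm_of_nonneg h0]
        _ ≤ _ := by
            simp only [Matrix.trace, Matrix.diag, Matrix.mul_apply]
            rw [← Fintype.sum_prod_type' (f := fun l l' => M l l' * Q l' l)]
            refine (norm_sum_le _ _).trans (le_of_eq ?_)
            simp
    have h0 : 0 ≤ N * ((N - 1) / 6) := by
      apply mul_nonneg <;> linarith
    have h2 := Finset.sum_mul_sq_le_sq_mul_sq univ
      (fun p : ι × ι => ‖M p.1 p.2‖) (fun p => ‖Q p.2 p.1‖)
    rw [Fintype.sum_prod_type (f := fun p : ι × ι => ‖M p.1 p.2‖ ^ 2),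
      Fintype.sum_prod_type (f := fun p : ι × ι => ‖Q p.2 p.1‖ ^ 2)] at h2
    dsimp only at h2
    rw [hQ2] at h2
    refine (pow_le_pow_left₀ h0 h1 2).trans (h2.trans ?_)
    refine mul_le_mul_of_nonneg_right hM2 ?_
    rw [← hQ2]
    positivity
  by_contra hd
  have hd' : (4 : ℝ) ≤ d := by exact_mod_cast (by omega : 4 ≤ d)
  have hpos : 0 < N * (N - 1) := by apply mul_pos <;> linarith
  have h5 : 0 ≤ N * (N - 1) * ((N + 3) * (N - d) - N * (N - 1)) := by nlinarith [hCS]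
  have h6 : 0 ≤ (N + 3) * (N - d) - N * (N - 1) := nonneg_of_mul_nonneg_right h5 hpos
  nlinarith

open Finset in
theorem kelly_scaling {ι R : Type*} [Fintype ι] [Fintype R] [DecidableEq ι]
    (S : R → Finset ι) (hS : ∀ r, (S r).card = 3) (w : R → ℝ) (hw : ∀ r, 0 < w r)
    (hpair : ∀ l l', l ≠ l' → ∑ r, (if l ∈ S r ∧ l' ∈ S r then w r else 0) = 1)
    (hN : 2 ≤ Fintype.card ι)
    (b : R → ι → ℝ) (hb0 : ∀ r l, l ∉ S r → b r l = 0) (hb1 : ∀ r l, l ∈ S r → 0 < b r l) :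
    ∃ x : ι → ℝ, (∀ l, 0 < x l) ∧
      ∀ l, ∑ r, w r * (b r l * x l / ∑ j, b r j * x j) = ((Fintype.card ι : ℝ) - 1) / 6 := by
  obtain ⟨hcol, hW⟩ := kelly_counts S hS w hpair
  set N : ℝ := (Fintype.card ι : ℝ) with hNdef
  have hN' : (2 : ℝ) ≤ N := by rw [hNdef]; exact_mod_cast hN
  have hbn : ∀ r l, 0 ≤ b r l := fun r l => by
    by_cases h : l ∈ S r
    · exact (hb1 r l h).le
    · rw [hb0 r l h]
  have hle : ∀ (t : ι → ℝ) r j, b r j * Real.exp (t j) ≤ ∑ j, b r j * Real.exp (t j) :=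
    fun t r j => Finset.single_le_sum (f := fun j => b r j * Real.exp (t j))
      (fun i _ => mul_nonneg (hbn r i) (Real.exp_pos _).le) (Finset.mem_univ j)
  have hDpos : ∀ (t : ι → ℝ) r, 0 < ∑ j, b r j * Real.exp (t j) := by
    intro t r
    have : (S r).Nonempty := by rw [← Finset.card_pos, hS]; norm_num
    obtain ⟨j, hj⟩ := this
    exact (mul_pos (hb1 r j hj) (Real.exp_pos _)).trans_le (hle t r j)
  let f : (ι → ℝ) → ℝ := fun t =>
    ∑ r, w r * Real.log (∑ j, b r j * Real.exp (t j)) - (N - 1) / 6 * ∑ j, t j + (∑ j, t j) ^ 2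
  have hfc : Continuous f := by
    refine Continuous.add (Continuous.sub ?_ (by fun_prop)) (by fun_prop)
    refine continuous_finsetSum _ fun r _ => Continuous.mul continuous_const ?_
    exact Continuous.log (by fun_prop) fun t => (hDpos t r).ne'
  -- constants
  obtain ⟨C, hC⟩ : ∃ C : ℝ, ∀ r j, -Real.log (b r j) ≤ C := by
    obtain ⟨C, hC⟩ := (Set.finite_range (fun p : R × ι => -Real.log (b p.1 p.2))).bddAbove
    exact ⟨C, fun r j => hC ⟨(r, j), rfl⟩⟩
  have hlog : ∀ (t : ι → ℝ) r j, j ∈ S r → t j - C ≤ Real.log (∑ j, b r j * Real.exp (t j)) := by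
    intro t r j hj
    have h1 := Real.log_le_log (mul_pos (hb1 r j hj) (Real.exp_pos _)) (hle t r j)
    rw [Real.log_mul (hb1 r j hj).ne' (Real.exp_pos _).ne', Real.log_exp] at h1
    linarith [hC r j]
  have hsumt : ∀ t : ι → ℝ, (N - 1) / 6 * ∑ j, t j = ∑ r, w r * ((∑ j ∈ S r, t j) / 3) := by
    intro t
    have e1 : ∀ r, w r * ((∑ j ∈ S r, t j) / 3) = ∑ j, (if j ∈ S r then w r else 0) * (t j / 3) := by
      intro r
      simp_rw [ite_mul, zero_mul]
      rw [← Finset.sum_filter, Finset.sum_div, Finset.mul_sum]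
      simp
    simp_rw [e1]
    rw [Finset.sum_comm]
    simp_rw [← Finset.sum_mul, hcol]
    rw [Finset.mul_sum]
    exact Finset.sum_congr rfl fun _ _ => by ring
  -- each term lower bound
  have hterm : ∀ (t : ι → ℝ) r, 0 ≤ Real.log (∑ j, b r j * Real.exp (t j)) + C -
      (∑ j ∈ S r, t j) / 3 := by
    intro t r
    have : ∑ j ∈ S r, t j ≤ ∑ j ∈ S r, (Real.log (∑ j, b r j * Real.exp (t j)) + C) :=
      Finset.sum_le_sum fun j hj => by linarith [hlog t r j hj]
    rw [Finset.sum_const, hS] at this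
    simp at this
    linarith
  have hterm2 : ∀ (t : ι → ℝ) r i j, i ∈ S r → j ∈ S r → i ≠ j →
      (t i - t j) / 3 ≤ Real.log (∑ j, b r j * Real.exp (t j)) + C - (∑ j ∈ S r, t j) / 3 := by
    intro t r i j hi hj hij
    have : ∑ j ∈ (S r).erase j, t j ≤
        ∑ j ∈ (S r).erase j, (Real.log (∑ j, b r j * Real.exp (t j)) + C) :=
      Finset.sum_le_sum fun j hj => by linarith [hlog t r j (Finset.mem_of_mem_erase hj)]
    rw [Finset.sum_const, Finset.card_erase_of_mem hj, hS] at this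
    have h2 := Finset.add_sum_erase (S r) t hj
    have h3 := hlog t r i hi
    simp at this
    linarith
  have hfeq : ∀ t, f t = ∑ r, w r * (Real.log (∑ j, b r j * Real.exp (t j)) + C -
      (∑ j ∈ S r, t j) / 3) - C * ∑ r, w r + (∑ j, t j) ^ 2 := by
    intro t
    simp only [f]
    rw [hsumt, Finset.mul_sum, ← Finset.sum_sub_distrib, ← Finset.sum_sub_distrib]
    congr 1
    exact Finset.sum_congr rfl fun _ _ => by ring
  have hex : ∀ i j, i ≠ j → ∃ r, i ∈ S r ∧ j ∈ S r := by
    intro i j hij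
    by_contra! h
    have := hpair i j hij
    rw [Finset.sum_eq_zero] at this
    · norm_num at this
    · intro r _
      rw [if_neg]
      exact fun hh => h r hh.1 hh.2
  obtain ⟨K, hK⟩ : ∃ K : ℝ, ∀ r, 3 / w r ≤ K := by
    obtain ⟨C, hC⟩ := (Set.finite_range (fun r => 3 / w r)).bddAbove
    exact ⟨C, fun r => hC ⟨r, rfl⟩⟩
  set B : ℝ := f 0 + C * ∑ r, w r with hB
  have hbdd : ∀ t, f t < f 0 → (∀ i j, t i - t j ≤ |K| * |B|) ∧ |∑ j, t j| ≤ |B| + 1 := by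
    intro t ht
    rw [hfeq t] at ht
    have hnn : ∀ r, 0 ≤ w r * (Real.log (∑ j, b r j * Real.exp (t j)) + C -
      (∑ j ∈ S r, t j) / 3) := fun r => mul_nonneg (hw r).le (hterm t r)
    have hnn' := Finset.sum_nonneg fun r (_ : r ∈ (univ : Finset R)) => hnn r
    have hBpos : 0 ≤ B := by nlinarith [sq_nonneg (∑ j, t j)]
    constructor
    · intro i j
      by_cases hij : i = j
      · subst hij; rw [sub_self]; positivity
      obtain ⟨r, hi, hj⟩ := hex i j hij
      have h1 := Finset.single_le_sum (fun r (_ : r ∈ (univ : Finset R)) => hnn r)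
        (Finset.mem_univ r)
      have h2 := mul_le_mul_of_nonneg_left (hterm2 t r i j hi hj hij) (hw r).le
      have h3 : w r * ((t i - t j) / 3) ≤ B := by nlinarith [sq_nonneg (∑ j, t j)]
      have h4 : t i - t j ≤ 3 / w r * B := by
        have := hw r
        rw [div_mul_eq_mul_div, le_div_iff₀ this]; linarith
      rw [abs_of_nonneg hBpos]
      exact h4.trans (mul_le_mul_of_nonneg_right ((hK r).trans (le_abs_self _)) hBpos)
    · have h1 : (∑ j, t j) ^ 2 ≤ B := by linarith
      rw [abs_of_nonneg hBpos]
      apply abs_le_of_sq_le_sq _ (by linarith)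
      nlinarith
  have hmin : ∃ t, ∀ s, f t ≤ f s := by
    refine hfc.exists_forall_le' 0 ?_
    have hcpt : IsCompact (Metric.closedBall (0 : ι → ℝ) (N * (|K| * |B|) + |B| + 1)) :=
      isCompact_closedBall _ _
    filter_upwards [hcpt.compl_mem_cocompact] with t ht
    by_contra! hlt
    apply ht
    obtain ⟨h1, h2⟩ := hbdd t hlt
    rw [mem_closedBall_zero_iff, pi_norm_le_iff_of_nonneg (by positivity)]
    intro i
    rw [Real.norm_eq_abs]
    have e1 : ∑ j, (t i - t j) = N * t i - ∑ j, t j := by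
      rw [Finset.sum_sub_distrib]; simp [hNdef]
    have e2 : ∑ j, (t i - t j) ≤ ∑ j : ι, |K| * |B| := Finset.sum_le_sum fun j _ => h1 i j
    have e3 : ∑ j : ι, -(|K| * |B|) ≤ ∑ j, (t i - t j) :=
      Finset.sum_le_sum fun j _ => by linarith [h1 j i]
    simp only [Finset.sum_const, Finset.card_univ, nsmul_eq_mul] at e2 e3
    rw [e1] at e2 e3
    have h3 : |N * t i| ≤ N * (|K| * |B|) + |B| + 1 := by
      rw [abs_le] at h2 ⊢
      constructor <;> linarith
    rw [abs_mul, abs_of_pos (by linarith : 0 < N)] at h3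
    nlinarith [abs_nonneg (t i)]
  obtain ⟨t, ht⟩ := hmin
  have hder : ∀ l, ∑ r, w r * (b r l * Real.exp (t l) / ∑ j, b r j * Real.exp (t j))
      - (N - 1) / 6 + 2 * ∑ j, t j = 0 := by
    intro l
    let g : ℝ → ℝ := fun s => f (fun j => t j + s * (if j = l then 1 else 0))
    have hg : IsLocalMin g 0 := by
      refine Filter.Eventually.of_forall fun s => ?_
      simp only [g, zero_mul, add_zero]
      exact ht _
    refine hg.hasDerivAt_eq_zero ?_
    have hlin : ∀ j, HasDerivAt (fun s : ℝ => t j + s * (if j = l then (1 : ℝ) else 0))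
        (if j = l then 1 else 0) 0 := by
      intro j
      simpa using ((hasDerivAt_id (0 : ℝ)).mul_const (if j = l then (1 : ℝ) else 0)).const_add (t j)
    have hsum : HasDerivAt (fun s : ℝ => ∑ j, (t j + s * (if j = l then (1 : ℝ) else 0))) 1 0 := by
      have := HasDerivAt.fun_sum (u := univ) fun j _ => hlin j
      simpa using this
    have hlogd : ∀ r, HasDerivAt (fun s : ℝ => Real.log (∑ j, b r j *
        Real.exp (t j + s * (if j = l then (1 : ℝ) else 0))))
        (b r l * Real.exp (t l) / ∑ j, b r j * Real.exp (t j)) 0 := by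
      intro r
      have h1 := HasDerivAt.fun_sum (u := univ) fun j _ => ((hlin j).exp.const_mul (b r j))
      have h2 := h1.log (by simpa using (hDpos t r).ne')
      simpa using h2
    have hfin := ((HasDerivAt.fun_sum (u := univ) fun r _ => (hlogd r).const_mul (w r)).sub
      (hsum.const_mul ((N - 1) / 6))).add (hsum.pow 2)
    refine (hfin.congr_deriv ?_)
    simp
  have hzero : ∑ j, t j = 0 := by
    have h1 : ∑ l, (∑ r, w r * (b r l * Real.exp (t l) / ∑ j, b r j * Real.exp (t j))
      - (N - 1) / 6 + 2 * ∑ j, t j) = 0 := Finset.sum_eq_zero fun l _ => hder l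
    rw [Finset.sum_add_distrib, Finset.sum_sub_distrib, Finset.sum_comm] at h1
    have h2 : ∀ r, ∑ l, w r * (b r l * Real.exp (t l) / ∑ j, b r j * Real.exp (t j)) = w r := by
      intro r
      rw [← Finset.mul_sum, ← Finset.sum_div, div_self (hDpos t r).ne', mul_one]
    simp_rw [h2] at h1
    rw [hW] at h1
    simp only [Finset.sum_const, Finset.card_univ, nsmul_eq_mul] at h1
    have h3 : N * (2 * ∑ j, t j) = 0 := by linarith
    rcases mul_eq_zero.1 h3 with h | h <;> linarith
  refine ⟨fun l => Real.exp (t l), fun l => Real.exp_pos _, fun l => ?_⟩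
  have := hder l
  rw [hzero] at this
  linarith

theorem kelly_rank {ι R τ : Type*} [Fintype ι] [Fintype R] [DecidableEq ι] [Fintype τ]
    (S : R → Finset ι) (hS : ∀ r, (S r).card = 3) (w : R → ℝ) (hw : ∀ r, 0 < w r)
    (hpair : ∀ l l', l ≠ l' → ∑ r, (if l ∈ S r ∧ l' ∈ S r then w r else 0) = 1)
    (hN : 2 ≤ Fintype.card ι)
    (a : R → ι → ℂ) (ha0 : ∀ r l, l ∉ S r → a r l = 0) (ha1 : ∀ r l, l ∈ S r → a r l ≠ 0)
    (v : τ → ι → ℂ) (hv : LinearIndependent ℂ v)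
    (hker : ∀ r i, ∑ l, a r l * v i l = 0) : Fintype.card τ ≤ 3 := by
  obtain ⟨x, hx, hcol⟩ := kelly_scaling S hS w hw hpair hN (fun r l => ‖a r l‖ ^ 2)
    (fun r l h => by simp [ha0 r l h])
    (fun r l h => by have := norm_pos_iff.2 (ha1 r l h); positivity)
  let D : R → ℝ := fun r => ∑ j, ‖a r j‖ ^ 2 * x j
  have hD : ∀ r, 0 < D r := by
    intro r
    have : (S r).Nonempty := by rw [← Finset.card_pos, hS]; norm_num
    obtain ⟨j, hj⟩ := this
    refine Finset.sum_pos' (fun i _ => mul_nonneg (by positivity) (hx i).le)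
      ⟨j, Finset.mem_univ j, ?_⟩
    have := norm_pos_iff.2 (ha1 r j hj)
    have := hx j
    positivity
  let c : R → ι → ℂ := fun r l => a r l * (Real.sqrt (x l) / Real.sqrt (D r) : ℝ)
  have hcn : ∀ r l, ‖c r l‖ ^ 2 = ‖a r l‖ ^ 2 * x l / D r := by
    intro r l
    simp only [c]
    rw [norm_mul, Complex.norm_real, mul_pow, Real.norm_eq_abs, sq_abs, div_pow,
      Real.sq_sqrt (hx l).le, Real.sq_sqrt (hD r).le, mul_div_assoc]
  let K : Submodule ℂ (EuclideanSpace ℂ ι) :=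
    { carrier := {u | ∀ r, ∑ l, c r l * u l = 0}
      add_mem' := by
        intro u u' hu hu' r
        simp [mul_add, Finset.sum_add_distrib, hu r, hu' r]
      zero_mem' := by intro r; simp
      smul_mem' := by
        intro z u hu r
        have : ∑ l, c r l * (z • u) l = z * ∑ l, c r l * u l := by
          rw [Finset.mul_sum]
          refine Finset.sum_congr rfl fun l _ => ?_
          simp; ring
        rw [this, hu r, mul_zero] }
  have hsx : ∀ l, ((Real.sqrt (x l) : ℝ) : ℂ) ≠ 0 := fun l => by
    exact_mod_cast (Real.sqrt_pos.2 (hx l)).ne'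
  let u : τ → EuclideanSpace ℂ ι := fun i => WithLp.toLp 2 fun l => v i l / (Real.sqrt (x l) : ℝ)
  have huK : ∀ i, u i ∈ K := by
    intro i r
    have : ∑ l, c r l * u i l = (1 / Real.sqrt (D r) : ℝ) * ∑ l, a r l * v i l := by
      rw [Finset.mul_sum]
      refine Finset.sum_congr rfl fun l _ => ?_
      simp only [c, u]
      have := hsx l
      push_cast
      field_simp
    rw [this, hker, mul_zero]
  have hu : LinearIndependent ℂ (fun i => (⟨u i, huK i⟩ : K)) := by
    apply LinearIndependent.of_comp K.subtype
    rw [Fintype.linearIndependent_iff] at hv ⊢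
    intro g hg
    apply hv g
    ext l
    have h1 := congrArg (fun z : EuclideanSpace ℂ ι => z l) hg
    simp [u] at h1
    have h2 : (∑ i, g i * v i l) / (Real.sqrt (x l) : ℝ) = 0 := by
      rw [← h1, Finset.sum_div]
      exact Finset.sum_congr rfl fun _ _ => by ring
    simpa [hsx l] using h2
  refine hu.fintype_card_le_finrank.trans ?_
  let e := stdOrthonormalBasis ℂ K
  refine kelly_core S hS w hw hpair hN c (fun r l h => by simp [c, ha0 r l h]) ?_ ?_ _
    (Matrix.of fun l k => (e k : EuclideanSpace ℂ ι) l) ?_ ?_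
  · intro r
    simp_rw [hcn]
    rw [← Finset.sum_div]
    exact div_self (hD r).ne'
  · intro l
    simp_rw [hcn]
    exact hcol l
  · ext k k'
    have h1 := orthonormal_iff_ite.1 e.orthonormal k k'
    rw [Submodule.coe_inner, PiLp.inner_apply] at h1
    rw [Matrix.mul_apply, Matrix.one_apply, ← h1]
    refine Finset.sum_congr rfl fun l _ => ?_
    simp [mul_comm]
  · intro r k
    exact (e k).2 r

theorem kelly_dep {V ι : Type*} [AddCommGroup V] [Module ℂ V] [Fintype ι] [DecidableEq ι]
    (p : ι → V) (hp : Function.Injective p) (s : Finset ι) (hs : s.card = 3)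
    (hcol : Collinear ℂ (p '' s)) :
    ∃ a : ι → ℂ, (∀ l, l ∉ s → a l = 0) ∧ (∀ l, l ∈ s → a l ≠ 0) ∧ ∑ l, a l = 0 ∧
      ∑ l, a l • p l = 0 := by
  obtain ⟨i, j, k, hij, hik, hjk, rfl⟩ := Finset.card_eq_three.1 hs
  have h1 : p k ∈ line[ℂ, p i, p j] := by
    rw [hcol.affineSpan_eq_of_ne (p₁ := p i) (p₂ := p j) ⟨i, by simp⟩ ⟨j, by simp⟩ (hp.ne hij)]
    exact subset_affineSpan _ _ ⟨k, by simp⟩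
  obtain ⟨t, ht⟩ := mem_affineSpan_pair_iff_exists_lineMap_eq.1 h1
  have ht0 : t ≠ 0 := by
    rintro rfl
    simp at ht
    exact hik (hp ht)
  have ht1 : t ≠ 1 := by
    rintro rfl
    simp at ht
    exact hjk (hp ht)
  refine ⟨fun l => (if l = i then 1 - t else 0) + (if l = j then t else 0) +
    (if l = k then -1 else 0), ?_, ?_, ?_, ?_⟩
  · intro l hl
    simp at hl
    simp [hl]
  · intro l hl
    simp at hl
    rcases hl with rfl | rfl | rfl
    · simpa [hij, hik, sub_eq_zero] using ht1.symm
    · simpa [hij.symm, hjk] using ht0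
    · simp [hik.symm, hjk.symm]
  · simp [Finset.sum_add_distrib]
  · simp only [add_smul, Finset.sum_add_distrib, ite_smul, zero_smul, Finset.sum_ite_eq',
      Finset.mem_univ, if_true, ← ht]
    rw [AffineMap.lineMap_apply_module]
    module

open Finset in
/-- Kelly's theorem: a finite set of more than two points in complex affine space `ℂⁿ`
that is not contained in any plane (`2`-dimensional affine subspace) admits a line
containing exactly two of its points. -/
theorem kelly_theorem_complex_affine
    (n : ℕ) (P : Set (Fin n → ℂ)) (hfin : P.Finite) (hcard : 2 < P.ncard)
    (hplane : ¬ ∃ A : AffineSubspace ℂ (Fin n → ℂ),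
      Module.finrank ℂ A.direction ≤ 2 ∧ P ⊆ (A : Set (Fin n → ℂ))) :
    ∃ ℓ : AffineSubspace ℂ (Fin n → ℂ), Module.finrank ℂ ℓ.direction = 1 ∧
      (P ∩ (ℓ : Set (Fin n → ℂ))).encard = 2 := by
  classical
  by_contra hno
  have : Fintype P := hfin.fintype
  let p : P → (Fin n → ℂ) := Subtype.val
  have hp : Function.Injective p := Subtype.val_injective
  have hN : 2 ≤ Fintype.card P := by
    rw [← Nat.card_eq_fintype_card, Nat.card_coe_set_eq]; exact hcard.le
  -- third point on each line
  have hthird : ∀ l l' : P, l ≠ l' → ∃ k, k ≠ l ∧ k ≠ l' ∧ p k ∈ line[ℂ, p l, p l'] := by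
    intro l l' hll
    by_contra! h
    apply hno
    refine ⟨line[ℂ, p l, p l'], ?_, ?_⟩
    · rw [direction_affineSpan, vectorSpan_pair_rev]
      exact finrank_span_singleton (by
        rw [vsub_eq_sub, sub_ne_zero]; exact hp.ne hll.symm)
    · have : P ∩ (line[ℂ, p l, p l'] : Set (Fin n → ℂ)) = {p l, p l'} := by
        ext y
        constructor
        · rintro ⟨hyP, hy⟩
          by_contra hy'
          simp only [Set.mem_insert_iff, Set.mem_singleton_iff, not_or] at hy'
          exact h ⟨y, hyP⟩ (fun e => hy'.1 (by rw [← e])) (fun e => hy'.2 (by rw [← e])) hy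
        · rintro (rfl | rfl)
          · exact ⟨l.2, left_mem_affineSpan_pair _ _ _⟩
          · exact ⟨l'.2, right_mem_affineSpan_pair _ _ _⟩
      rw [this]
      exact Set.encard_pair (hp.ne hll)
  let R := {s : Finset P // s.card = 3 ∧ Collinear ℂ (p '' s)}
  let L : Finset P → Finset P := fun s => univ.filter fun k => p k ∈ affineSpan ℂ (p '' s)
  let w : R → ℝ := fun r => 1 / ((L r.1).card - 2 : ℝ)
  have hsub : ∀ s, s ⊆ L s := by
    intro s k hk
    simp only [L, mem_filter, mem_univ, true_and]
    exact subset_affineSpan _ _ ⟨k, hk, rfl⟩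
  have hw : ∀ r, 0 < w r := by
    intro r
    have h1 := card_le_card (hsub r.1)
    rw [r.2.1] at h1
    have : (3 : ℝ) ≤ (L r.1).card := by exact_mod_cast h1
    apply one_div_pos.2
    linarith
  have hpair : ∀ l l' : P, l ≠ l' →
      ∑ r : R, (if l ∈ r.1 ∧ l' ∈ r.1 then w r else 0) = 1 := by
    intro l l' hll
    let G : Finset P := univ.filter fun k => p k ∈ line[ℂ, p l, p l']
    have hLG : ∀ r : R, l ∈ r.1 → l' ∈ r.1 → L r.1 = G := by
      intro r h h'
      simp only [L, G]
      rw [r.2.2.affineSpan_eq_of_ne (p₁ := p l) (p₂ := p l') ⟨l, h, rfl⟩ ⟨l', h', rfl⟩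
        (hp.ne hll)]
    have hlG : l ∈ G := by simp [G, left_mem_affineSpan_pair]
    have hlG' : l' ∈ G.erase l := by
      simp [G, right_mem_affineSpan_pair, hll.symm]
    have hcardE : ((G.erase l).erase l').card = G.card - 2 := by
      rw [card_erase_of_mem hlG', card_erase_of_mem hlG]; omega
    obtain ⟨k, hk1, hk2, hk3⟩ := hthird l l' hll
    have hpos : 0 < ((G.erase l).erase l').card :=
      card_pos.2 ⟨k, by simp [hk1, hk2, G, hk3]⟩
    have hbij : ((G.erase l).erase l').card =
        (univ.filter fun r : R => l ∈ r.1 ∧ l' ∈ r.1).card := by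
      refine card_bij (fun k hk => ⟨{l, l', k}, ?_, ?_⟩) ?_ ?_ ?_
      · simp only [mem_erase] at hk
        exact card_eq_three.2 ⟨l, l', k, hll, Ne.symm hk.2.1, Ne.symm hk.1, rfl⟩
      · simp only [mem_erase, G, mem_filter, mem_univ, true_and] at hk
        have : p '' (({l, l', k} : Finset P) : Set P) = {p k, p l, p l'} := by
          simp only [coe_insert, coe_singleton, Set.image_insert_eq, Set.image_singleton]
          ext y; simp only [Set.mem_insert_iff, Set.mem_singleton_iff]; tauto
        rw [this]
        exact collinear_insert_of_mem_affineSpan_pair hk.2.2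
      · intro k hk
        simp
      · intro k hk k' hk' h
        simp only [mem_erase] at hk hk'
        have h1 := congrArg Subtype.val h
        have h2 : k ∈ ({l, l', k'} : Finset P) := by
          rw [← show ({l, l', k} : Finset P) = {l, l', k'} from h1]; simp
        simp only [mem_insert, mem_singleton] at h2
        tauto
      · rintro r hr
        simp only [mem_filter, mem_univ, true_and] at hr
        have hc : ((r.1.erase l).erase l').card = 1 := by
          rw [card_erase_of_mem (mem_erase.2 ⟨hll.symm, hr.2⟩), card_erase_of_mem hr.1, r.2.1]
        obtain ⟨k, hk⟩ := card_eq_one.1 hc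
        have hkm : k ∈ (r.1.erase l).erase l' := by rw [hk]; simp
        simp only [mem_erase] at hkm
        refine ⟨k, ?_, ?_⟩
        · simp only [mem_erase]
          refine ⟨hkm.1, hkm.2.1, ?_⟩
          rw [← hLG r hr.1 hr.2]
          exact hsub _ hkm.2.2
        · apply Subtype.ext
          show ({l, l', k} : Finset P) = r.1
          rw [← insert_erase hr.1, ← insert_erase (mem_erase.2 ⟨hll.symm, hr.2⟩), hk]
    rw [← sum_filter, sum_congr rfl (g := fun _ => 1 / ((G.card : ℝ) - 2))]
    · rw [sum_const, ← hbij, hcardE, nsmul_eq_mul]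
      have h3 : 3 ≤ G.card := by omega
      have h4 : (3 : ℝ) ≤ G.card := by exact_mod_cast h3
      rw [Nat.cast_sub (by omega)]
      push_cast
      exact mul_one_div_cancel (by linarith)
    · intro r hr
      simp only [mem_filter, mem_univ, true_and] at hr
      simp only [w]
      rw [hLG r hr.1 hr.2]
  choose a ha0 ha1 ha2 ha3 using fun r : R => kelly_dep p hp r.1 r.2.1 r.2.2
  -- affinely independent points
  obtain ⟨t, htP, htspan, htind⟩ := exists_affineIndependent ℂ (Fin n → ℂ) P
  have : Fintype t := (hfin.subset htP).fintype
  obtain ⟨T, htT, hTind, hTspan⟩ := exists_subset_affineIndependent_affineSpan_eq_top htind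
  let b : AffineBasis T ℂ (Fin n → ℂ) := ⟨fun q => q, hTind, by
    rw [Subtype.range_coe]; exact hTspan⟩
  have hcoord : ∀ i j : T, b.coord i (j : Fin n → ℂ) = if i = j then 1 else 0 :=
    fun i j => b.coord_apply i j
  let v : t → P → ℂ := fun i l => b.coord ⟨i, htT i.2⟩ (p l)
  have hv : LinearIndependent ℂ v := by
    rw [Fintype.linearIndependent_iff]
    intro g hg i
    have h1 := congrFun hg ⟨i, htP i.2⟩
    simp only [Finset.sum_apply, Pi.smul_apply, smul_eq_mul, Pi.zero_apply, v, p] at h1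
    have h2 : ∀ j : t, b.coord ⟨j, htT j.2⟩ (i : Fin n → ℂ) = if j = i then 1 else 0 := by
      intro j
      have := hcoord ⟨j, htT j.2⟩ ⟨i, htT i.2⟩
      simpa [Subtype.ext_iff] using this
    simpa [h2] using h1
  have hle := kelly_rank (fun r : R => r.1) (fun r => r.2.1) w hw hpair hN a ha0 ha1 v hv (by
    intro r i
    simp only [v]
    set F := b.coord ⟨i, htT i.2⟩
    have hF : ∀ y, F y = F.linear y + F 0 := fun y => congrFun F.decomp y
    simp_rw [hF (p _), mul_add, sum_add_distrib, ← sum_mul, ha2, zero_mul, add_zero]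
    have := congrArg F.linear (ha3 r)
    simpa using this)
  apply hplane
  refine ⟨affineSpan ℂ P, ?_, subset_affineSpan _ _⟩
  rw [← htspan, direction_affineSpan]
  rcases Nat.eq_zero_or_pos (Fintype.card t) with h0 | h0
  · have : t = ∅ := by
      rw [Fintype.card_eq_zero_iff] at h0
      exact Set.isEmpty_coe_sort.1 h0
    rw [this, vectorSpan_empty]; simp
  · have := htind.finrank_vectorSpan (n := Fintype.card t - 1)
      (Nat.sub_add_cancel h0).symm
    rw [Subtype.range_coe] at this
    omega
end

section
/- (Motzkin's observation over ℂ.) Let p be a point of ℂ^n and let L be a finite family of at least two distinct (affine) lines in ℂ^n, each passing through p. If the union of the lines in L is not contained in any 3-dimensional affine subspace of ℂ^n, then there exist two distinct lines ℓ_1, ℓ_2 ∈ L such that the 2-dimensional plane spanned by ℓ_1 ∪ ℓ_2 contains no other line of the family L. -/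
open Matrix Finset
open scoped ComplexOrder
set_option linter.unusedSectionVars false

section proj
variable {ι κ : Type*} [Fintype ι] [DecidableEq ι] [Fintype κ] [DecidableEq κ]

noncomputable def projM (Y : Matrix ι κ ℂ) : Matrix ι ι ℂ := Y * (Yᴴ * Y)⁻¹ * Yᴴ

lemma gram_unit (Y : Matrix ι κ ℂ) (h : ∀ x, Y *ᵥ x = 0 → x = 0) : IsUnit (Yᴴ * Y).det := by
  rw [← Matrix.isUnit_iff_isUnit_det, ← Matrix.mulVec_injective_iff_isUnit]
  have : Function.Injective ((Yᴴ * Y).mulVecLin) := by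
    rw [← LinearMap.ker_eq_bot, LinearMap.ker_eq_bot']
    intro x hx
    exact h x ((Matrix.conjTranspose_mul_self_mulVec_eq_zero Y x).1 hx)
  exact this

lemma projM_mul (Y : Matrix ι κ ℂ) (h : ∀ x, Y *ᵥ x = 0 → x = 0) : projM Y * Y = Y := by
  unfold projM
  rw [Matrix.mul_assoc, Matrix.mul_assoc, Matrix.nonsing_inv_mul _ (gram_unit Y h), Matrix.mul_one]

lemma projM_sq (Y : Matrix ι κ ℂ) (h : ∀ x, Y *ᵥ x = 0 → x = 0) :
    projM Y * projM Y = projM Y := by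
  conv_lhs => rw [show projM Y * projM Y = projM Y * Y * (Yᴴ * Y)⁻¹ * Yᴴ by
    conv_lhs => rhs; unfold projM
    simp only [Matrix.mul_assoc]]
  rw [projM_mul Y h]; rfl

lemma projM_herm (Y : Matrix ι κ ℂ) : (projM Y)ᴴ = projM Y := by
  unfold projM
  simp [Matrix.conjTranspose_mul, Matrix.conjTranspose_nonsing_inv, Matrix.mul_assoc]

lemma projM_trace (Y : Matrix ι κ ℂ) (h : ∀ x, Y *ᵥ x = 0 → x = 0) :
    (projM Y).trace = Fintype.card κ := by
  unfold projM
  rw [Matrix.trace_mul_comm, ← Matrix.mul_assoc, Matrix.mul_nonsing_inv _ (gram_unit Y h),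
    Matrix.trace_one]

/-- Frobenius norm of a Hermitian idempotent -/
lemma frob_proj (Q : Matrix ι ι ℂ) (h1 : Qᴴ = Q) (h2 : Q * Q = Q) :
    ((∑ i, ∑ j, ‖Q i j‖ ^ 2 : ℝ) : ℂ) = Q.trace := by
  conv_rhs => rw [← h2]
  simp only [Matrix.trace, Matrix.diag, Matrix.mul_apply]
  push_cast
  refine sum_congr rfl fun i _ => sum_congr rfl fun j _ => ?_
  have : Q j i = star (Q i j) := by
    conv_lhs => rw [← h1]
    rfl
  rw [this, ← Complex.mul_conj']; rfl

lemma frob_cs (A B : Matrix ι ι ℂ) :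
    ‖(A * B).trace‖ ^ 2 ≤ (∑ i, ∑ j, ‖A i j‖ ^ 2) * (∑ i, ∑ j, ‖B i j‖ ^ 2) := by
  have h1 : ‖(A * B).trace‖ ≤ ∑ p : ι × ι, ‖A p.1 p.2‖ * ‖B p.2 p.1‖ := by
    rw [Fintype.sum_prod_type]
    simp only [Matrix.trace, Matrix.diag, Matrix.mul_apply]
    refine (norm_sum_le _ _).trans (sum_le_sum fun i _ => (norm_sum_le _ _).trans ?_)
    simp
  have h2 := sum_mul_sq_le_sq_mul_sq univ (fun p : ι × ι => ‖A p.1 p.2‖) (fun p => ‖B p.2 p.1‖)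
  rw [Fintype.sum_prod_type, Fintype.sum_prod_type, Fintype.sum_prod_type] at h2
  rw [Fintype.sum_prod_type] at h1
  rw [sum_comm (f := fun i j => ‖B i j‖ ^ 2)]
  exact (pow_le_pow_left₀ (norm_nonneg _) h1 2).trans h2

/-- rank bound -/
lemma rank_bound (M : Matrix ι ι ℂ) (Z : Matrix ι κ ℂ) (h : ∀ x, Z *ᵥ x = 0 → x = 0)
    (hM : M * Z = 0) :
    ‖M.trace‖ ^ 2 ≤ (∑ i, ∑ j, ‖M i j‖ ^ 2) * (Fintype.card ι - Fintype.card κ) := by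
  have h0 : M * projM Z = 0 := by
    unfold projM
    rw [← Matrix.mul_assoc, ← Matrix.mul_assoc, hM]; simp
  have h1 := frob_cs M (1 - projM Z)
  have h2 := frob_proj (1 - projM Z) (by simp [projM_herm])
    (by simp [sub_mul, mul_sub, projM_sq Z h])
  rw [Matrix.trace_sub, projM_trace Z h, Matrix.trace_one] at h2
  have h3 : (∑ i, ∑ j, ‖(1 - projM Z) i j‖ ^ 2 : ℝ) = (Fintype.card ι : ℝ) - Fintype.card κ := by
    exact_mod_cast h2
  rw [mul_sub, h0, h3] at h1
  simpa using h1
end proj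

section analytic
variable {ι : Type*} [Fintype ι] [DecidableEq ι]

lemma approx_crit (g : (ι → ℝ) → ℝ) (hc : Continuous g) (K : ℝ) (hK : ∀ t, K ≤ g t)
    (d : (ι → ℝ) → ι → ℝ)
    (hd : ∀ t i, HasDerivAt (fun h : ℝ => g (t + h • Pi.single i 1)) (d t i) 0) :
    ∃ t, ∑ i, d t i ^ 2 ≤ 1 := by
  set C := g 0 - K + 1 with hC
  have hCpos : 0 < C := by have := hK 0; linarith
  set ε := 1 / (4 * C) with hε
  have hεpos : 0 < ε := by positivity
  set G : (ι → ℝ) → ℝ := fun t => g t + ε * ∑ i, t i ^ 2 with hG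
  have hGc : Continuous G := by fun_prop
  obtain ⟨t, ht⟩ : ∃ t, ∀ s, G t ≤ G s := by
    have hb : Bornology.IsBounded {s : ι → ℝ | G s ≤ G 0} := by
      rw [isBounded_iff_forall_norm_le]
      refine ⟨Real.sqrt (C / ε), fun s hs => ?_⟩
      rw [pi_norm_le_iff_of_nonneg (Real.sqrt_nonneg _)]
      intro i
      rw [Real.norm_eq_abs]
      apply Real.abs_le_sqrt
      have h1 : s i ^ 2 ≤ ∑ i, s i ^ 2 := 
        single_le_sum (f := fun i => s i ^ 2) (fun _ _ => sq_nonneg _) (mem_univ i)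
      have h2 : G s ≤ G 0 := hs
      simp only [hG] at h2
      have := hK s
      rw [le_div_iff₀ hεpos]
      have h3 : ε * s i ^ 2 ≤ ε * ∑ i, s i ^ 2 := by gcongr
      simp at h2
      linarith
    have hcomp : IsCompact {s : ι → ℝ | G s ≤ G 0} :=
      Metric.isCompact_of_isClosed_isBounded (isClosed_le hGc continuous_const) hb
    obtain ⟨t, ht, hmin⟩ := hcomp.exists_isMinOn ⟨0, le_refl (G 0)⟩ hGc.continuousOn
    refine ⟨t, fun s => ?_⟩
    by_cases hs : G s ≤ G 0
    · exact hmin hs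
    · exact le_trans ht (le_of_not_ge hs)
  refine ⟨t, ?_⟩
  have hcrit : ∀ i, d t i = - (2 * ε * t i) := by
    intro i
    have h1 : HasDerivAt (fun h : ℝ => ε * ∑ j, ((t + h • (Pi.single i 1 : ι → ℝ)) j) ^ 2)
        (ε * ∑ j, 2 * t j * (Pi.single i 1 : ι → ℝ) j) 0 := by
      apply HasDerivAt.const_mul
      apply HasDerivAt.fun_sum
      intro j _
      have : HasDerivAt (fun h : ℝ => t j + h * (Pi.single i 1 : ι → ℝ) j) 
         ((Pi.single i 1 : ι → ℝ) j) 0 := by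
        simpa using ((hasDerivAt_id (0:ℝ)).mul_const ((Pi.single i 1 : ι → ℝ) j)).const_add (t j)
      simpa using this.fun_pow 2
    have h2 := (hd t i).add h1
    have h3 : IsLocalMin (fun h : ℝ => g (t + h • Pi.single i 1) + 
       ε * ∑ j, ((t + h • (Pi.single i 1 : ι → ℝ)) j) ^ 2) 0 := by
      apply Filter.Eventually.of_forall
      intro h
      have := ht (t + h • Pi.single i 1)
      simpa [hG] using this
    have h4 := h3.hasDerivAt_eq_zero h2
    simp [Pi.single_apply] at h4
    linarith
  have h5 : ∑ i, d t i ^ 2 = 4 * ε * (ε * ∑ i, t i ^ 2) := by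
    simp only [hcrit, mul_sum]
    exact sum_congr rfl fun i _ => by ring
  have h6 : ε * ∑ i, t i ^ 2 ≤ C := by
    have := ht 0
    simp [hG] at this
    have := hK t
    linarith
  rw [h5]
  calc 4 * ε * (ε * ∑ i, t i ^ 2) ≤ 4 * ε * C := by gcongr
    _ = 1 := by rw [hε]; field_simp
end analytic

section line
variable {ι : Type*} [Fintype ι] [DecidableEq ι]

noncomputable def ww (u : ι → Fin 2 → ℂ) (i j : ι) : ℝ := ‖u i 0 * u j 1 - u i 1 * u j 0‖ ^ 2

noncomputable def DD (u : ι → Fin 2 → ℂ) (t : ι → ℝ) : ℝ :=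
  (1 / 2) * ∑ i, ∑ j, Real.exp (t i) * Real.exp (t j) * ww u i j

noncomputable def qq (u : ι → Fin 2 → ℂ) (t : ι → ℝ) (i : ι) : ℝ :=
  (∑ j, Real.exp (t i) * Real.exp (t j) * ww u i j) / DD u t

lemma ww_nonneg (u : ι → Fin 2 → ℂ) (i j : ι) : 0 ≤ ww u i j := sq_nonneg _

lemma ww_symm (u : ι → Fin 2 → ℂ) (i j : ι) : ww u i j = ww u j i := by
  unfold ww
  rw [← norm_neg]; congr 2; ring

lemma le_DD (u : ι → Fin 2 → ℂ) (t : ι → ℝ) {i j : ι} (hij : i ≠ j) :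
    Real.exp (t i) * Real.exp (t j) * ww u i j ≤ DD u t := by
  have h0 : ∀ a b, 0 ≤ Real.exp (t a) * Real.exp (t b) * ww u a b := fun a b =>
    mul_nonneg (by positivity) (ww_nonneg _ _ _)
  have h1 : ∀ a b, Real.exp (t a) * Real.exp (t b) * ww u a b ≤
      ∑ j, Real.exp (t a) * Real.exp (t j) * ww u a j := fun a b =>
    single_le_sum (f := fun j => Real.exp (t a) * Real.exp (t j) * ww u a j)
      (fun j _ => h0 a j) (mem_univ b)
  have h2 := sum_le_sum_of_subset_of_nonneg (subset_univ {i, j})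
    (f := fun a => ∑ j, Real.exp (t a) * Real.exp (t j) * ww u a j)
    (fun a _ _ => sum_nonneg fun b _ => h0 a b)
  rw [sum_pair hij] at h2
  have h3 := h1 i j
  have h4 := h1 j i
  rw [ww_symm u j i, mul_comm (Real.exp (t j))] at h4
  unfold DD
  linarith

lemma DD_pos (u : ι → Fin 2 → ℂ) (t : ι → ℝ) {i j : ι} (hij : i ≠ j)
    (h : u i 0 * u j 1 - u i 1 * u j 0 ≠ 0) : 0 < DD u t := by
  refine lt_of_lt_of_le ?_ (le_DD u t hij)
  have : 0 < ww u i j := by unfold ww; positivity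
  positivity

lemma log_DD_ge (u : ι → Fin 2 → ℂ) (t : ι → ℝ) {i j : ι} (hij : i ≠ j)
    (h : u i 0 * u j 1 - u i 1 * u j 0 ≠ 0) :
    t i + t j + Real.log (ww u i j) ≤ Real.log (DD u t) := by
  have : 0 < ww u i j := by unfold ww; positivity
  have h1 := Real.log_le_log (by positivity) (le_DD u t hij)
  rwa [Real.log_mul (by positivity) (by positivity), Real.log_mul (by positivity) (by positivity),
    Real.log_exp, Real.log_exp] at h1

lemma sum_offDiag_add (S : Finset ι) (t : ι → ℝ) :
    ∑ p ∈ S.offDiag, (t p.1 + t p.2) = 2 * (S.card - 1) * ∑ i ∈ S, t i := by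
  have h := sum_union (disjoint_diag_offDiag S) (f := fun p : ι × ι => t p.1 + t p.2)
  rw [diag_union_offDiag, sum_product] at h
  have h2 : ∑ p ∈ S.diag, (t p.1 + t p.2) = 2 * ∑ i ∈ S, t i := by
    rw [sum_diag, mul_sum]; exact sum_congr rfl fun i _ => by ring
  simp only [sum_add_distrib, sum_const, nsmul_eq_mul] at h h2
  rw [h2, ← mul_sum] at h
  rw [sum_add_distrib]
  linarith

lemma line_bdd (u : ι → Fin 2 → ℂ) (S : Finset ι) (hS : 2 ≤ S.card)
    (hdet : ∀ i ∈ S, ∀ j ∈ S, i ≠ j → u i 0 * u j 1 - u i 1 * u j 0 ≠ 0) :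
    ∃ K, ∀ t : ι → ℝ, K ≤ Real.log (DD u t) - 2 / S.card * ∑ i ∈ S, t i := by
  have hr : (2:ℝ) ≤ S.card := by exact_mod_cast hS
  set r : ℝ := (S.card : ℝ) with hrdef
  refine ⟨(∑ p ∈ S.offDiag, Real.log (ww u p.1 p.2)) / (r * (r - 1)), fun t => ?_⟩
  have h1 : ∑ p ∈ S.offDiag, (t p.1 + t p.2 + Real.log (ww u p.1 p.2)) ≤
      ∑ p ∈ S.offDiag, Real.log (DD u t) := by
    apply sum_le_sum
    rintro ⟨i, j⟩ hp
    rw [mem_offDiag] at hp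
    exact log_DD_ge u t hp.2.2 (hdet _ hp.1 _ hp.2.1 hp.2.2)
  rw [sum_add_distrib, sum_offDiag_add, sum_const, offDiag_card, nsmul_eq_mul,
    Nat.cast_sub (Nat.le_mul_self _)] at h1
  push_cast at h1
  rw [← hrdef] at h1
  have hp : 0 < r * (r - 1) := by nlinarith
  rw [div_le_iff₀ hp]
  have : (Real.log (DD u t) - 2 / r * ∑ i ∈ S, t i) * (r * (r - 1)) =
     (r * r - r) * Real.log (DD u t) - 2 * (r - 1) * ∑ i ∈ S, t i := by
    field_simp
  rw [this]; linarith

lemma DD_deriv (u : ι → Fin 2 → ℂ) (t : ι → ℝ) (i : ι) :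
    HasDerivAt (fun h : ℝ => DD u (t + h • Pi.single i 1))
      (∑ j, Real.exp (t i) * Real.exp (t j) * ww u i j) 0 := by
  have he : ∀ a, HasDerivAt (fun h : ℝ => Real.exp ((t + h • (Pi.single i 1 : ι → ℝ)) a))
      (Real.exp (t a) * (Pi.single i 1 : ι → ℝ) a) 0 := by
    intro a
    have : HasDerivAt (fun h : ℝ => t a + h * (Pi.single i 1 : ι → ℝ) a) 
         ((Pi.single i 1 : ι → ℝ) a) 0 := by
      simpa using ((hasDerivAt_id (0:ℝ)).mul_const ((Pi.single i 1 : ι → ℝ) a)).const_add (t a)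
    simpa using this.exp
  have h := (HasDerivAt.fun_sum (u := univ) fun a _ => HasDerivAt.fun_sum (u := univ) fun b _ =>
    (((he a).fun_mul (he b)).mul_const (ww u a b))).const_mul (1/2 : ℝ)
  unfold DD
  refine h.congr_deriv ?_
  simp only [zero_smul, add_zero]
  simp only [add_mul, sum_add_distrib]
  have e1 : ∑ a, ∑ b, Real.exp (t a) * (Pi.single i 1 : ι → ℝ) a * Real.exp (t b) * ww u a b
     = ∑ j, Real.exp (t i) * Real.exp (t j) * ww u i j := by
    rw [sum_eq_single i]
    · simp
    · intro a _ ha; simp [ha]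
    · simp
  have e2 : ∑ a, ∑ b, Real.exp (t a) * (Real.exp (t b) * (Pi.single i 1 : ι → ℝ) b) * ww u a b
     = ∑ j, Real.exp (t i) * Real.exp (t j) * ww u i j := by
    rw [sum_comm, sum_eq_single i]
    · refine sum_congr rfl fun a _ => ?_
      rw [ww_symm u a i, Pi.single_eq_same]; ring
    · intro a _ ha; simp [ha]
    · simp
  rw [e1, e2]; ring

/-- scaled matrix -/
noncomputable def YY (u : ι → Fin 2 → ℂ) (t : ι → ℝ) : Matrix ι (Fin 2) ℂ :=
  Matrix.of fun i k => (Real.exp (t i / 2) : ℂ) * u i k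

lemma YY_inj (u : ι → Fin 2 → ℂ) (t : ι → ℝ) {i j : ι}
    (h : u i 0 * u j 1 - u i 1 * u j 0 ≠ 0) (x : Fin 2 → ℂ) (hx : YY u t *ᵥ x = 0) : x = 0 := by
  have key : ∀ a, u a 0 * x 0 + u a 1 * x 1 = 0 := by
    intro a
    have := congrFun hx a
    simp only [YY, mulVec, dotProduct, Fin.sum_univ_two, Matrix.of_apply, Pi.zero_apply] at this
    have h2 : (Real.exp (t a / 2) : ℂ) * (u a 0 * x 0 + u a 1 * x 1) = 0 := by
      rw [← this]; ring
    rcases mul_eq_zero.1 h2 with h3 | h3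
    · exact absurd h3 (by exact_mod_cast (Real.exp_pos _).ne')
    · exact h3
  have hi := key i
  have hj := key j
  have h0 : (u i 0 * u j 1 - u i 1 * u j 0) * x 0 = 0 := by
    linear_combination u j 1 * hi - u i 1 * hj
  have h1 : (u i 0 * u j 1 - u i 1 * u j 0) * x 1 = 0 := by
    linear_combination - u j 0 * hi + u i 0 * hj
  funext k
  fin_cases k
  · exact (mul_eq_zero.1 h0).resolve_left h
  · exact (mul_eq_zero.1 h1).resolve_left h

lemma YY_adj (u : ι → Fin 2 → ℂ) (t : ι → ℝ) (i : ι) :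
    (YY u t * ((YY u t)ᴴ * YY u t).adjugate * (YY u t)ᴴ) i i =
      ((∑ j, Real.exp (t i) * Real.exp (t j) * ww u i j : ℝ) : ℂ) := by
  have hexp : ∀ a, (Real.exp (t a) : ℂ) = (Real.exp (t a / 2) : ℂ) * (Real.exp (t a / 2) : ℂ) := by
    intro a
    rw [← Complex.ofReal_mul, ← Real.exp_add]; congr 2; ring
  have hw : ∀ j, (ww u i j : ℂ) = (u i 0 * u j 1 - u i 1 * u j 0) *
      (starRingEnd ℂ) (u i 0 * u j 1 - u i 1 * u j 0) := by
    intro j; unfold ww; push_cast; rw [Complex.mul_conj']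
  rw [Matrix.adjugate_fin_two]
  push_cast
  simp only [← Complex.ofReal_exp]
  simp only [Matrix.mul_apply, Fin.sum_univ_two, hexp, hw, YY, Matrix.of_apply,
    Matrix.conjTranspose_apply, Matrix.cons_val', Matrix.cons_val_zero, Matrix.cons_val_one,
    Matrix.cons_val_fin_one, star_mul', RCLike.star_def, Complex.conj_ofReal, map_sub, map_mul]
  simp only [add_mul, mul_neg, neg_mul, mul_sum, sum_mul, ← sum_neg_distrib,
    ← sum_add_distrib]
  refine sum_congr rfl fun j _ => ?_
  ring

lemma YY_det (u : ι → Fin 2 → ℂ) (t : ι → ℝ) :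
    ((YY u t)ᴴ * YY u t).det = (DD u t : ℂ) := by
  have h : (YY u t * ((YY u t)ᴴ * YY u t).adjugate * (YY u t)ᴴ).trace =
      2 * ((YY u t)ᴴ * YY u t).det := by
    rw [Matrix.trace_mul_comm, ← Matrix.mul_assoc, Matrix.mul_adjugate, Matrix.trace_smul,
      Matrix.trace_one]
    simp [mul_comm]
  have h2 : (YY u t * ((YY u t)ᴴ * YY u t).adjugate * (YY u t)ᴴ).trace =
     ((∑ i, ∑ j, Real.exp (t i) * Real.exp (t j) * ww u i j : ℝ) : ℂ) := by
    rw [Complex.ofReal_sum]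
    exact sum_congr rfl fun i _ => YY_adj u t i
  rw [h2] at h
  unfold DD
  rw [Complex.ofReal_mul, h]
  push_cast; ring

lemma projM_diag (u : ι → Fin 2 → ℂ) (t : ι → ℝ) (i : ι) :
    projM (YY u t) i i = (qq u t i : ℂ) := by
  unfold projM qq
  rw [Matrix.inv_def, Matrix.mul_smul, Matrix.smul_mul, Matrix.smul_apply, YY_adj, YY_det,
    Ring.inverse_eq_inv', smul_eq_mul, Complex.ofReal_div]
  field_simp

lemma projM_off (u : ι → Fin 2 → ℂ) (t : ι → ℝ) (i j : ι) (h : u i = 0 ∨ u j = 0) :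
    projM (YY u t) i j = 0 := by
  rcases h with h | h
  · unfold projM
    rw [Matrix.mul_assoc, Matrix.mul_apply]
    exact sum_eq_zero fun k _ => by simp [YY, h]
  · unfold projM
    rw [Matrix.mul_apply]
    exact sum_eq_zero fun k _ => by simp [YY, h]
end line

lemma DD_cont {ι : Type*} [Fintype ι] [DecidableEq ι] (u : ι → Fin 2 → ℂ) : Continuous (DD u) := by
  unfold DD; fun_prop

lemma qq_sum {ι : Type*} [Fintype ι] [DecidableEq ι] (u : ι → Fin 2 → ℂ) (t : ι → ℝ)
    (h : 0 < DD u t) : ∑ i, qq u t i = 2 := by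
  unfold qq
  rw [← sum_div, div_eq_iff h.ne']
  unfold DD; ring

section core
variable {ι Λ : Type*} [Fintype ι] [DecidableEq ι] [Fintype Λ] [DecidableEq Λ]

lemma count1 (S : Λ → Finset ι) (hpair : ∀ i j, i ≠ j → ∃! l, i ∈ S l ∧ j ∈ S l) (i : ι) :
    ∑ l, (if i ∈ S l then ((S l).card - 1 : ℝ) else 0) = Fintype.card ι - 1 := by
  have h1 : ∀ l, (if i ∈ S l then ((S l).card - 1 : ℝ) else 0) =
      ∑ j ∈ univ.erase i, if i ∈ S l ∧ j ∈ S l then (1:ℝ) else 0 := by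
    intro l
    by_cases h : i ∈ S l
    · simp only [h, if_true, true_and]
      rw [← sum_filter, sum_const, nsmul_eq_mul, mul_one]
      have : (univ.erase i).filter (fun j => j ∈ S l) = (S l).erase i := by
        ext j; simp
      rw [this, card_erase_of_mem h, Nat.cast_sub (card_pos.2 ⟨i, h⟩)]; simp
    · simp [h]
  simp only [h1]
  rw [sum_comm]
  have h2 : ∀ j ∈ univ.erase i, (∑ l, if i ∈ S l ∧ j ∈ S l then (1:ℝ) else 0) = 1 := by
    intro j hj
    obtain ⟨l, hl, hu⟩ := hpair i j (ne_of_mem_erase hj).symm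
    rw [sum_eq_single l]
    · simp [hl]
    · intro b _ hb
      rw [if_neg]; intro h; exact hb (hu b h)
    · simp
  rw [sum_congr rfl h2, sum_const, card_erase_of_mem (mem_univ i), nsmul_eq_mul, mul_one,
    Nat.cast_sub (card_pos.2 ⟨i, mem_univ i⟩)]
  simp

lemma count2 (S : Λ → Finset ι) (hpair : ∀ i j, i ≠ j → ∃! l, i ∈ S l ∧ j ∈ S l) :
    ∑ l, ((S l).card * ((S l).card - 1) : ℝ) = Fintype.card ι * (Fintype.card ι - 1) := by
  have h : ∑ i : ι, ∑ l, (if i ∈ S l then ((S l).card - 1 : ℝ) else 0) =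
      Fintype.card ι * (Fintype.card ι - 1) := by
    simp [count1 S hpair]; ring
  rw [sum_comm] at h
  rw [← h]
  refine sum_congr rfl fun l _ => ?_
  simp; ring

theorem core (S : Λ → Finset ι) (h3 : ∀ l, 3 ≤ (S l).card)
    (hpair : ∀ i j, i ≠ j → ∃! l, i ∈ S l ∧ j ∈ S l)
    (u : Λ → ι → Fin 2 → ℂ) (hu0 : ∀ l i, i ∉ S l → u l i = 0)
    (hdet : ∀ l, ∀ i ∈ S l, ∀ j ∈ S l, i ≠ j → u l i 0 * u l j 1 - u l i 1 * u l j 0 ≠ 0)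
    (v : ι → Fin 4 → ℂ) (E : Λ → Matrix (Fin 2) (Fin 4) ℂ)
    (hE : ∀ l, ∀ i ∈ S l, ∀ k, v i k = u l i 0 * E l 0 k + u l i 1 * E l 1 k)
    (hv : ∀ x : Fin 4 → ℂ, (∀ i, ∑ k, v i k * x k = 0) → x = 0) : False := by
  set N : ℝ := (Fintype.card ι : ℝ) with hN
  have hr : ∀ l, (3:ℝ) ≤ (S l).card := fun l => by exact_mod_cast h3 l
  set r : Λ → ℝ := fun l => ((S l).card : ℝ) with hrdef
  replace hr : ∀ l, 3 ≤ r l := hr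
  set c : Λ → ℝ := fun l => r l * (r l - 1) / (r l - 2) with hc
  have hcpos : ∀ l, 0 < c l := fun l => by
    have := hr l
    exact div_pos (mul_pos (by linarith) (by linarith)) (by linarith)
  have hex : ∀ l, ∃ i j, i ≠ j ∧ u l i 0 * u l j 1 - u l i 1 * u l j 0 ≠ 0 := by
    intro l
    obtain ⟨i, hi, j, hj, hij⟩ := one_lt_card.1 (lt_of_lt_of_le (by norm_num) (h3 l))
    exact ⟨i, j, hij, hdet l i hi j hj hij⟩
  have hDpos : ∀ l t, 0 < DD (u l) t := by
    intro l t
    obtain ⟨i, j, hij, h⟩ := hex l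
    exact DD_pos (u l) t hij h
  choose K hK using fun l => line_bdd (u l) (S l) (le_trans (by norm_num) (h3 l)) (hdet l)
  set χ : Λ → ι → ℝ := fun l i => if i ∈ S l then 1 else 0 with hχ
  set d : (ι → ℝ) → ι → ℝ := fun t i => ∑ l, c l * (qq (u l) t i - 2 / r l * χ l i) with hd
  obtain ⟨t, ht⟩ := approx_crit
    (fun t => ∑ l, c l * (Real.log (DD (u l) t) - 2 / r l * ∑ i ∈ S l, t i))
    (by
      refine continuous_finsetSum _ fun l _ => continuous_const.mul (Continuous.sub ?_ ?_)
      · exact (DD_cont (u l)).log fun t => (hDpos l t).ne'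
      · fun_prop)
    (∑ l, c l * K l)
    (fun t => sum_le_sum fun l _ => mul_le_mul_of_nonneg_left (hK l t) (hcpos l).le)
    d
    (by
      intro t i
      refine HasDerivAt.fun_sum fun l _ => HasDerivAt.const_mul _ (HasDerivAt.sub ?_ ?_)
      · have := (DD_deriv (u l) t i).log (by simpa using (hDpos l t).ne')
        simpa [qq] using this
      · apply HasDerivAt.const_mul
        have h1 : HasDerivAt (fun h : ℝ => ∑ j ∈ S l, (t + h • (Pi.single i 1 : ι → ℝ)) j)
          (∑ j ∈ S l, (Pi.single i 1 : ι → ℝ) j) 0 := by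
          apply HasDerivAt.fun_sum
          intro j _
          simpa using
            ((hasDerivAt_id (0:ℝ)).mul_const ((Pi.single i 1 : ι → ℝ) j)).const_add (t j)
        refine h1.congr_deriv ?_
        simp [hχ, Pi.single_apply])
  -- the matrix
  set Q : Λ → Matrix ι ι ℂ := fun l => projM (YY (u l) t) with hQ
  have hinj : ∀ l x, YY (u l) t *ᵥ x = 0 → x = 0 := by
    intro l x hx
    obtain ⟨i, j, hij, h⟩ := hex l
    exact YY_inj (u l) t h x hx
  set M : Matrix ι ι ℂ :=
    ∑ l, (c l : ℂ) • (Matrix.diagonal (fun i => (χ l i : ℂ)) - Q l) with hM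
  set Z : Matrix ι (Fin 4) ℂ := Matrix.of fun i k => (Real.exp (t i / 2) : ℂ) * v i k with hZ
  have hZinj : ∀ x, Z *ᵥ x = 0 → x = 0 := by
    intro x hx
    apply hv
    intro i
    have := congrFun hx i
    simp only [hZ, mulVec, dotProduct, Matrix.of_apply, Pi.zero_apply, mul_assoc] at this
    rw [← mul_sum] at this
    rcases mul_eq_zero.1 this with h | h
    · exact absurd h (by exact_mod_cast (Real.exp_pos _).ne')
    · exact h
  have hMZ : M * Z = 0 := by
    rw [hM, Matrix.sum_mul]
    refine sum_eq_zero fun l _ => ?_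
    rw [Matrix.smul_mul, Matrix.sub_mul]
    have e1 : Matrix.diagonal (fun i => (χ l i : ℂ)) * Z = YY (u l) t * E l := by
      ext i k
      rw [Matrix.diagonal_mul]
      by_cases hi : i ∈ S l
      · simp [hχ, hi, hZ, Matrix.mul_apply, YY, hE l i hi k]; ring
      · simp [hχ, hi, Matrix.mul_apply, YY, hu0 l i hi]
    have e2 : Q l * Z = Q l * (Matrix.diagonal (fun i => (χ l i : ℂ)) * Z) := by
      ext i k
      rw [Matrix.mul_apply, Matrix.mul_apply]
      refine sum_congr rfl fun j _ => ?_
      rw [Matrix.diagonal_mul]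
      by_cases hj : j ∈ S l
      · simp [hχ, hj]
      · simp [hχ, hj, hQ, projM_off (u l) t i j (Or.inr (hu0 l j hj))]
    rw [e2, e1, ← Matrix.mul_assoc, projM_mul _ (hinj l), sub_self, smul_zero]
  have hbound := rank_bound M Z hZinj hMZ
  -- diagonal
  have hdiag : ∀ i, M i i = ((N - 1 - d t i : ℝ) : ℂ) := by
    intro i
    have h1 : M i i = ((∑ l, c l * (χ l i - qq (u l) t i) : ℝ) : ℂ) := by
      rw [hM, Matrix.sum_apply]
      push_cast
      refine sum_congr rfl fun l _ => ?_
      simp [hQ, projM_diag]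
    rw [h1, ← count1 S hpair i]
    congr 1
    rw [eq_sub_iff_add_eq, hd, ← sum_add_distrib]
    refine sum_congr rfl fun l _ => ?_
    have h := hr l
    have h' : r l - 2 ≠ 0 := by linarith
    have h'' : r l ≠ 0 := by linarith
    change _ = if i ∈ S l then r l - 1 else 0
    by_cases hi : i ∈ S l
    · simp only [hχ, hi, if_true, hc]; field_simp; ring
    · simp [hχ, hi]
  have hdsum : ∑ i, d t i = 0 := by
    rw [hd, sum_comm]
    refine sum_eq_zero fun l _ => ?_
    rw [← mul_sum, sum_sub_distrib, qq_sum _ _ (hDpos l t), ← mul_sum]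
    have : ∑ i, χ l i = r l := by simp [hχ, hrdef]
    rw [this]
    have h := hr l
    have h'' : r l ≠ 0 := by linarith
    field_simp; ring
  have htrace : M.trace = ((N * (N - 1) : ℝ) : ℂ) := by
    simp only [Matrix.trace, Matrix.diag, hdiag]
    rw [← Complex.ofReal_sum, sum_sub_distrib, hdsum]
    simp [hN]; ring
  -- Frobenius norm
  have hoff : ∀ i j, i ≠ j → ‖M i j‖ ^ 2 = ∑ l, c l ^ 2 * ‖Q l i j‖ ^ 2 := by
    intro i j hij
    obtain ⟨l, hl, hu⟩ := hpair i j hij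
    have hz : ∀ b, b ≠ l → Q b i j = 0 := by
      intro b hb
      apply projM_off
      by_contra hcon
      rw [not_or] at hcon
      refine hb (hu b ⟨?_, ?_⟩)
      · by_contra h; exact hcon.1 (hu0 b i h)
      · by_contra h; exact hcon.2 (hu0 b j h)
    have h1 : M i j = - ((c l : ℂ) * Q l i j) := by
      rw [hM, Matrix.sum_apply, sum_eq_single l]
      · simp [Matrix.diagonal_apply_ne _ hij]
      · intro b _ hb
        simp [Matrix.diagonal_apply_ne _ hij, hz b hb]
      · simp
    rw [h1, sum_eq_single l]
    · rw [norm_neg, norm_mul, mul_pow]; simp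
    · intro b _ hb; simp [hz b hb]
    · simp
  have hQoff : ∀ l, ∑ p ∈ univ.offDiag, ‖Q l p.1 p.2‖ ^ 2 ≤ 2 - 4 / r l := by
    intro l
    have h1 := frob_proj (Q l) (projM_herm _) (projM_sq _ (hinj l))
    rw [projM_trace _ (hinj l)] at h1
    have h2 : ∑ i, ∑ j, ‖Q l i j‖ ^ 2 = 2 := by
      have : ((∑ i, ∑ j, ‖Q l i j‖ ^ 2 : ℝ) : ℂ) = ((2:ℝ) : ℂ) := by rw [h1]; simp
      exact_mod_cast this
    rw [← sum_product' univ univ (fun i j => ‖Q l i j‖ ^ 2), ← diag_union_offDiag,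
      sum_union (disjoint_diag_offDiag _), sum_diag] at h2
    have h4 : ∑ i ∈ S l, qq (u l) t i = 2 := by
      rw [← qq_sum _ _ (hDpos l t)]
      apply sum_subset (subset_univ _)
      intro i _ hi
      have := projM_diag (u l) t i
      rw [projM_off (u l) t i i (Or.inl (hu0 l i hi))] at this
      exact_mod_cast this.symm
    have h5 := sq_sum_le_card_mul_sum_sq (s := S l) (f := fun i => qq (u l) t i)
    rw [h4] at h5
    have h6 : ∑ i ∈ S l, qq (u l) t i ^ 2 ≤ ∑ i, ‖Q l i i‖ ^ 2 := by
      refine le_trans (sum_le_sum_of_subset_of_nonneg (subset_univ _)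
        fun i _ _ => sq_nonneg _) (sum_le_sum fun i _ => ?_)
      simp [hQ, projM_diag]
    have h := hr l
    have h7 : 4 / r l ≤ ∑ i ∈ S l, qq (u l) t i ^ 2 := by
      rw [div_le_iff₀ (by linarith)]
      change 2 ^ 2 ≤ r l * _ at h5
      linarith
    simp only at h2
    linarith
  have hfrob : ∑ i, ∑ j, ‖M i j‖ ^ 2 ≤ N * (N - 1) ^ 2 + 1 + 4 * (N * (N - 1)) := by
    rw [← sum_product' univ univ (fun i j => ‖M i j‖ ^ 2), ← diag_union_offDiag,
      sum_union (disjoint_diag_offDiag _), sum_diag]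
    apply add_le_add
    · have : ∀ i, ‖M i i‖ ^ 2 = (N - 1) ^ 2 - 2 * (N - 1) * d t i + d t i ^ 2 := by
        intro i
        rw [hdiag, Complex.norm_real, Real.norm_eq_abs, sq_abs]; ring
      simp only [this, sum_add_distrib, sum_sub_distrib, ← mul_sum, hdsum]
      simp [← hN]
      exact ht
    · have e1 : ∑ p ∈ univ.offDiag, ‖M p.1 p.2‖ ^ 2 =
          ∑ l, c l ^ 2 * ∑ p ∈ univ.offDiag, ‖Q l p.1 p.2‖ ^ 2 := by
        simp only [mul_sum]
        rw [sum_comm]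
        refine sum_congr rfl fun p hp => ?_
        exact hoff _ _ (mem_offDiag.1 hp).2.2
      rw [e1, hN, ← count2 S hpair, mul_sum]
      refine sum_le_sum fun l _ => ?_
      refine (mul_le_mul_of_nonneg_left (hQoff l) (sq_nonneg _)).trans ?_
      change _ ≤ 4 * (r l * (r l - 1))
      have h := hr l
      have h' : 0 < r l - 2 := by linarith
      have h'' : 0 < r l := by linarith
      have e2 : c l ^ 2 * (2 - 4 / r l) = r l * (r l - 1) * (2 * (r l - 1) / (r l - 2)) := by
        simp only [hc]; field_simp; ring
      rw [e2, mul_comm]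
      apply mul_le_mul_of_nonneg_right _ (mul_nonneg h''.le (by linarith))
      rw [div_le_iff₀ h']; linarith
  have hN4 : 4 ≤ N := by
    by_contra hlt
    have h1 : 0 ≤ ∑ i, ∑ j, ‖(1 - projM Z) i j‖ ^ 2 :=
      sum_nonneg fun i _ => sum_nonneg fun j _ => sq_nonneg _
    have h2 := frob_proj (1 - projM Z) (by simp [projM_herm])
      (by simp [sub_mul, mul_sub, projM_sq Z hZinj])
    rw [Matrix.trace_sub, projM_trace Z hZinj, Matrix.trace_one] at h2
    have h3 : (∑ i, ∑ j, ‖(1 - projM Z) i j‖ ^ 2 : ℝ) =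
      (Fintype.card ι : ℝ) - Fintype.card (Fin 4) := by exact_mod_cast h2
    rw [h3, ← hN] at h1
    simp at h1
    linarith
  rw [htrace, Complex.norm_real, Real.norm_eq_abs, sq_abs, ← hN] at hbound
  simp only [Fintype.card_fin] at hbound
  push_cast at hbound
  have := hbound.trans (mul_le_mul_of_nonneg_right hfrob (by linarith))
  nlinarith [mul_nonneg (sub_nonneg.2 hN4) (sub_nonneg.2 hN4)]
end core

section final
open Submodule

lemma linear_kelly {ι V : Type*} [Fintype ι] [DecidableEq ι] [AddCommGroup V] [Module ℂ V]
    [FiniteDimensional ℂ V] (v : ι → V)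
    (hind : ∀ i j, i ≠ j → ∀ s t : ℂ, s • v i + t • v j = 0 → s = 0 ∧ t = 0)
    (hSG : ∀ i j, i ≠ j → ∃ k, k ≠ i ∧ k ≠ j ∧ v k ∈ span ℂ {v i, v j}) :
    Module.finrank ℂ (span ℂ (Set.range v)) ≤ 3 := by
  classical
  by_contra hcon
  have h4 : 4 ≤ Module.finrank ℂ (span ℂ (Set.range v)) := by omega
  set W := span ℂ (Set.range v) with hW
  obtain ⟨ψ, hψ⟩ : ∃ ψ : W →ₗ[ℂ] (Fin 4 → ℂ), Function.Surjective ψ := by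
    refine ⟨(LinearMap.funLeft ℂ ℂ (Fin.castLE h4)) ∘ₗ
      (Module.finBasis ℂ W).equivFun.toLinearMap, ?_⟩
    exact (LinearMap.funLeft_surjective_of_injective ℂ ℂ (Fin.castLE h4) (Fin.castLE_injective h4)).comp
      (Module.finBasis ℂ W).equivFun.surjective
  obtain ⟨φ, hφ⟩ := LinearMap.exists_extend ψ
  have hrank : ∀ i j, i ≠ j → Module.finrank ℂ (span ℂ {v i, v j}) = 2 := by
    intro i j hij
    have h : LinearIndependent ℂ ![v i, v j] := LinearIndependent.pair_iff.2 (hind i j hij)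
    have := finrank_span_eq_card h
    rw [Matrix.range_cons, Matrix.range_cons, Matrix.range_empty, Set.union_empty,
      Set.singleton_union] at this
    simpa using this
  set T : Finset (Submodule ℂ V) :=
    (univ : Finset ι).offDiag.image (fun p => span ℂ {v p.1, v p.2}) with hT
  have hTex : ∀ l : T, ∃ a b, a ≠ b ∧ span ℂ {v a, v b} = l.1 := by
    intro l
    obtain ⟨p, hp, h⟩ := mem_image.1 l.2
    exact ⟨p.1, p.2, (mem_offDiag.1 hp).2.2, h⟩
  choose a b hab hl using hTex
  set S : T → Finset ι := fun l => univ.filter (fun k => v k ∈ l.1) with hS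
  have hmem : ∀ l i, i ∈ S l ↔ v i ∈ l.1 := by intro l i; simp [hS]
  have hco : ∀ (l : T) (i : ι), ∃ x : Fin 2 → ℂ, (i ∉ S l → x = 0) ∧
      (i ∈ S l → x 0 • v (a l) + x 1 • v (b l) = v i) := by
    intro l i
    by_cases h : i ∈ S l
    · have h' := (hmem l i).1 h
      rw [← hl l, mem_span_pair] at h'
      obtain ⟨x, y, hxy⟩ := h'
      exact ⟨![x, y], fun h2 => absurd h h2, fun _ => by simpa using hxy⟩
    · exact ⟨0, fun _ => rfl, fun h2 => absurd h2 h⟩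
  choose u hu0 hu using hco
  refine core S ?_ ?_ u hu0 ?_ (fun i => φ (v i))
    (fun l => Matrix.of ![φ (v (a l)), φ (v (b l))]) ?_ ?_
  · intro l
    obtain ⟨k, hka, hkb, hk⟩ := hSG _ _ (hab l)
    have hsub : {a l, b l, k} ⊆ S l := by
      intro i hi
      rw [hmem, ← hl l]
      simp only [mem_insert, mem_singleton] at hi
      rcases hi with rfl | rfl | rfl
      · exact subset_span (by simp)
      · exact subset_span (by simp)
      · exact hk
    have := card_le_card hsub
    rwa [card_eq_three.2 ⟨a l, b l, k, hab l, hka.symm, hkb.symm, rfl⟩] at this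
  · intro i j hij
    refine ⟨⟨span ℂ {v i, v j}, mem_image.2 ⟨(i, j), by simp [hij], rfl⟩⟩, ?_, ?_⟩
    · simp only [hmem]
      exact ⟨subset_span (by simp), subset_span (by simp)⟩
    · rintro l ⟨h1, h2⟩
      rw [hmem] at h1 h2
      apply Subtype.ext
      symm
      apply Submodule.eq_of_le_of_finrank_eq
      · rw [span_le]
        rintro x (rfl | rfl)
        · exact h1
        · exact h2
      · rw [← hl l, hrank _ _ hij, hrank _ _ (hab l)]
  · intro l i hi j hj hij h0
    have ei := hu l i hi
    have ej := hu l j hj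
    have k1 := hind i j hij (u l j 1) (- u l i 1) (by
      rw [← ei, ← ej]
      refine Eq.trans (b := (u l i 0 * u l j 1 - u l i 1 * u l j 0) • v (a l)) (by module) ?_
      rw [h0, zero_smul])
    have k0 := hind i j hij (u l j 0) (- u l i 0) (by
      rw [← ei, ← ej]
      refine Eq.trans (b := (-(u l i 0 * u l j 1 - u l i 1 * u l j 0)) • v (b l)) (by module) ?_
      rw [h0, neg_zero, zero_smul])
    have z0 : u l i 0 = 0 := by simpa using k0.2
    have z1 : u l i 1 = 0 := by simpa using k1.2
    rw [z0, z1] at ei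
    have := (hind i j hij 1 0 (by rw [← ei]; simp)).1
    exact one_ne_zero this
  · intro l i hi k
    have := congrFun (congrArg φ (hu l i hi)) k
    simp at this
    simp [this]
  · intro x hx
    set f : V →ₗ[ℂ] ℂ := (Fintype.linearCombination ℂ x) ∘ₗ φ with hf
    have hz : ∀ w ∈ W, f w = 0 := by
      intro w hw
      have : W ≤ LinearMap.ker f := by
        rw [hW, span_le]
        rintro _ ⟨i, rfl⟩
        have := hx i
        simpa [hf, Fintype.linearCombination_apply] using this
      exact this hw
    funext k
    obtain ⟨w, hw⟩ := hψ (Pi.single k 1)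
    have h1 := hz w.1 w.2
    have h2 : φ w.1 = Pi.single k 1 := by rw [← hw, ← hφ]; rfl
    simpa [hf, h2, Fintype.linearCombination_apply_single] using h1
end final

/-- Motzkin's observation over `ℂ`: a finite pencil of at least two distinct affine lines
through a common point `p` of `ℂⁿ`, whose union is not contained in any `3`-dimensional
affine subspace, contains two lines whose spanned plane contains no other line of the
pencil. -/
theorem motzkin_observation_complex_pencil
    (n : ℕ) (p : Fin n → ℂ) (L : Finset (AffineSubspace ℂ (Fin n → ℂ)))
    (hL : 2 ≤ L.card)
    (hline : ∀ ℓ ∈ L, Module.finrank ℂ (AffineSubspace.direction ℓ) = 1 ∧ p ∈ ℓ)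
    (hspan : ¬ ∃ A : AffineSubspace ℂ (Fin n → ℂ),
      Module.finrank ℂ A.direction ≤ 3 ∧
        (⋃ ℓ ∈ L, (ℓ : Set (Fin n → ℂ))) ⊆ (A : Set (Fin n → ℂ))) :
    ∃ ℓ₁ ∈ L, ∃ ℓ₂ ∈ L, ℓ₁ ≠ ℓ₂ ∧
      ∀ ℓ ∈ L, ℓ ≠ ℓ₁ → ℓ ≠ ℓ₂ →
        ¬ (ℓ : Set (Fin n → ℂ)) ⊆
          (affineSpan ℂ ((ℓ₁ : Set (Fin n → ℂ)) ∪ (ℓ₂ : Set (Fin n → ℂ))) :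
            Set (Fin n → ℂ)) := by
  classical
  by_contra hcon
  push Not at hcon
  have hex : ∀ ℓ : L, ∃ w : Fin n → ℂ, w ≠ 0 ∧ ℓ.1.direction = Submodule.span ℂ {w} := by
    intro ℓ
    obtain ⟨w, hw, h⟩ := finrank_eq_one_iff'.1 (hline ℓ.1 ℓ.2).1
    refine ⟨w.1, fun h0 => hw (Subtype.ext h0), le_antisymm ?_ ?_⟩
    · intro x hx
      obtain ⟨c, hc⟩ := h ⟨x, hx⟩
      exact Submodule.mem_span_singleton.2 ⟨c, congrArg Subtype.val hc⟩
    · rw [Submodule.span_le]; rintro _ rfl; exact w.2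
  choose v hv0 hv using hex
  have hmem : ∀ (ℓ : L) x, x ∈ ℓ.1 ↔ x - p ∈ Submodule.span ℂ {v ℓ} := by
    intro ℓ x
    rw [← hv ℓ]
    exact (AffineSubspace.vsub_right_mem_direction_iff_mem (hline ℓ.1 ℓ.2).2 x).symm
  have hpar : ∀ i j : L, v i ∈ Submodule.span ℂ {v j} → i = j := by
    intro i j h
    obtain ⟨c, hc⟩ := Submodule.mem_span_singleton.1 h
    have hc0 : c ≠ 0 := by
      rintro rfl; exact hv0 i (by rw [← hc]; simp)
    apply Subtype.ext
    ext x
    rw [hmem, hmem, ← hc, Submodule.span_singleton_smul_eq (IsUnit.mk0 c hc0)]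
  have key := linear_kelly v ?_ ?_
  · apply hspan
    refine ⟨AffineSubspace.mk' p (Submodule.span ℂ (Set.range v)), by rw [AffineSubspace.direction_mk']; exact key, ?_⟩
    intro x hx
    simp only [Set.mem_iUnion] at hx
    obtain ⟨ℓ, hℓ, hx⟩ := hx
    have h1 := (hmem ⟨ℓ, hℓ⟩ x).1 hx
    have h2 : x - p ∈ Submodule.span ℂ (Set.range v) :=
      Submodule.span_mono (by rintro _ rfl; exact ⟨_, rfl⟩) h1
    exact (AffineSubspace.mem_mk').2 h2
  · intro i j hij s t h
    have hs : s = 0 := by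
      by_contra hs
      apply hij
      apply hpar
      refine Submodule.mem_span_singleton.2 ⟨- (s⁻¹ * t), ?_⟩
      have h2 : s • v i = - (t • v j) := eq_neg_of_add_eq_zero_left h
      rw [← inv_smul_smul₀ hs (v i), h2, smul_neg, smul_smul, neg_smul]
    refine ⟨hs, ?_⟩
    rw [hs, zero_smul, zero_add] at h
    exact (smul_eq_zero.1 h).resolve_right (hv0 j)
  · intro i j hij
    obtain ⟨ℓ, hℓ, h1, h2, h3⟩ := hcon i.1 i.2 j.1 j.2 (fun h => hij (Subtype.ext h))
    refine ⟨⟨ℓ, hℓ⟩, fun h => h1 (congrArg Subtype.val h), fun h => h2 (congrArg Subtype.val h), ?_⟩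
    have hle : affineSpan ℂ ((i.1 : Set (Fin n → ℂ)) ∪ (j.1 : Set (Fin n → ℂ))) ≤
        AffineSubspace.mk' p (Submodule.span ℂ {v i, v j}) := by
      rw [affineSpan_le]
      rintro x (hx | hx)
      · exact (AffineSubspace.mem_mk').2
          (Submodule.span_mono (by rintro _ rfl; simp) ((hmem i x).1 hx))
      · exact (AffineSubspace.mem_mk').2
          (Submodule.span_mono (by rintro _ rfl; simp) ((hmem j x).1 hx))
    have hin : v ⟨ℓ, hℓ⟩ + p ∈ ℓ := by
      rw [hmem ⟨ℓ, hℓ⟩, add_sub_cancel_right]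
      exact Submodule.mem_span_singleton_self _
    have := (AffineSubspace.mem_mk').1 (hle (h3 hin))
    simpa using this
end
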